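/- arXiv:2310.19118 — 3 statements merged into one kernel-verified Lean document; each statement's English description precedes it below -/
import Mathlib

section
/- (Liouville theorem for the fractional Laplacian.) Let n ≥ 1, s ∈ (0,1), and let γ ∈ [0,1] with γ < 2s. Suppose u ∈ L¹_s(ℝⁿ) is continuous on ℝⁿ, is s-harmonic at every point of ℝⁿ, and satisfies liminf_{|x|→∞} u(x)/|x|^γ ≥ 0. Then u is constant on ℝⁿ. -/
open MeasureTheory Filter Metric Set
open scoped Topology

open Module

/-!
Touching a solution that is nonnegative in the unit ball from below by a truncated paraboloid and
testing the equation at the contact point, gives a weak Harnack inequality: the weighted integral of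
its positive part is at most a multiple of its value at the origin plus the weighted integral of its
negative part. Applied to `a * u x₀ - u` around a point `x₀` that maximizes `u` against a power of
the distance to the boundary, it bounds `u` locally by its `L¹_s` norm.

Hölder continuity comes from the Ishii–Lions method. If `u x - u y - A * φ ‖x - y‖`, localized in
`x`, had a positive maximum, subtract the equations at the two points after reflecting the
increments near `y` in the hyperplane orthogonal to `x - y`: the strict concavity of `φ` then yields
a contribution of order `-A`, while all other terms are bounded. If `2 * s ≤ 1`, take `φ r = r ^ p`
with `p < 2 * s`; if `2 * s > 1`, then `φ r = 4 * r - r ^ (2 * s)` gives a Lipschitz bound, so that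
`p = 1` is allowed.

Thus `p` can be chosen with `γ ≤ p < 2 * s`. By the weak Harnack inequality the one-sided growth
condition bounds the `L¹_s` norm of `u (R • ·)` by `o(R ^ p)`, so the Hölder estimate for it at
`x / R` tends to `0` as `R → ∞`.
-/

namespace FractionalLiouville

/-! ### Weights and truncated kernels -/

section Kernel

variable {E : Type*} [NormedAddCommGroup E] {q : ℝ}

/-- The weight of the space `L¹_s`, in the smooth form `(1 + ‖z‖) ^ (-q)` with `q = n + 2s`; it is
comparable to `1 / (1 + ‖z‖ ^ q)`. -/
noncomputable def weight (q : ℝ) (z : E) : ℝ := (1 + ‖z‖) ^ (-q)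

/-- The kernel `‖z‖ ^ (-q)` cut off on the closed ball of radius `ε`, which turns integrals over
`{‖z‖ > ε}` into integrals over the whole space. -/
noncomputable def truncKernel (q ε : ℝ) (z : E) : ℝ := if ε < ‖z‖ then ‖z‖ ^ (-q) else 0

lemma weight_pos (z : E) : 0 < weight q z := by
  unfold weight
  positivity

lemma continuous_weight : Continuous (weight q : E → ℝ) :=
  Continuous.rpow_const (by fun_prop) fun z => .inl (by positivity)

lemma truncKernel_nonneg (ε : ℝ) (z : E) : 0 ≤ truncKernel q ε z := by
  unfold truncKernel
  positivity

lemma truncKernel_of_lt {ε : ℝ} {z : E} (hz : ε < ‖z‖) : truncKernel q ε z = ‖z‖ ^ (-q) :=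
  if_pos hz

lemma truncKernel_congr_norm {z w : E} (h : ‖z‖ = ‖w‖) (ε : ℝ) :
    truncKernel q ε z = truncKernel q ε w := by
  simp only [truncKernel, h]

lemma measurable_truncKernel [MeasurableSpace E] [OpensMeasurableSpace E] (ε : ℝ) :
    Measurable (truncKernel q ε : E → ℝ) :=
  Measurable.ite (measurableSet_lt measurable_const measurable_norm)
    (measurable_norm.pow_const _) measurable_const

lemma truncKernel_smul [NormedSpace ℝ E] {ρ : ℝ} (hρ : 0 < ρ) (ε : ℝ) (z : E) :
    truncKernel q (ρ * ε) (ρ • z) = ρ ^ (-q) * truncKernel q ε z := by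
  simp only [truncKernel, norm_smul, Real.norm_of_nonneg hρ.le, mul_lt_mul_iff_right₀ hρ,
    Real.mul_rpow hρ.le (norm_nonneg z), mul_ite, mul_zero]

lemma rpow_neg_le_mul_rpow_neg (hq : 0 ≤ q) {a b c : ℝ} (ha : 0 < a) (hb : 0 < b) (hc : 0 < c)
    (h : a ≤ c * b) : b ^ (-q) ≤ c ^ q * a ^ (-q) :=
  calc b ^ (-q) = c ^ q * (c * b) ^ (-q) := by
        rw [Real.mul_rpow hc.le hb.le, ← mul_assoc, ← Real.rpow_add hc, add_neg_cancel,
          Real.rpow_zero, one_mul]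
    _ ≤ c ^ q * a ^ (-q) := by
        exact mul_le_mul_of_nonneg_left (Real.rpow_le_rpow_of_nonpos ha h (neg_nonpos.2 hq))
          (by positivity)

lemma weight_le_mul_weight (hq : 0 ≤ q) {c : ℝ} (hc : 0 < c) {y z : E}
    (h : 1 + ‖y‖ ≤ c * (1 + ‖z‖)) : weight q z ≤ c ^ q * weight q y :=
  rpow_neg_le_mul_rpow_neg hq (by positivity) (by positivity) hc h

lemma truncKernel_le_mul_weight (hq : 0 ≤ q) {c ε : ℝ} (hc : 0 < c) {y z : E}
    (h : ε < ‖z‖ → 1 + ‖y‖ ≤ c * ‖z‖) : truncKernel q ε z ≤ c ^ q * weight q y := by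
  have hy := weight_pos (q := q) y
  unfold truncKernel
  split_ifs with hz
  · have hz0 : 0 < ‖z‖ := pos_of_mul_pos_right (lt_of_lt_of_le (by positivity) (h hz)) hc.le
    exact rpow_neg_le_mul_rpow_neg hq (by positivity) hz0 hc (h hz)
  · positivity

lemma weight_le_mul_weight_add_smul [NormedSpace ℝ E] (hq : 0 ≤ q) (x z : E) {ρ : ℝ}
    (hρ : 0 < ρ) : weight q z ≤ (1 + ‖x‖ + ρ) ^ q * weight q (x + ρ • z) := by
  refine weight_le_mul_weight hq (by positivity) ?_
  have hxz : ‖x + ρ • z‖ ≤ ‖x‖ + ρ * ‖z‖ := by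
    simpa [norm_smul, abs_of_pos hρ] using norm_add_le x (ρ • z)
  have : 0 ≤ (1 + ‖x‖) * ‖z‖ := by positivity
  linarith

end Kernel

section Integrability

variable {E : Type*} [NormedAddCommGroup E] [MeasurableSpace E] {q : ℝ} {μ : Measure E}

lemma integrable_mul_truncKernel_of_mul_weight [OpensMeasurableSpace E] (hq : 0 ≤ q) {ε : ℝ}
    (hε : 0 < ε) {f : E → ℝ} (hf : Integrable (fun z => f z * weight q z) μ) :
    Integrable (fun z => f z * truncKernel q ε z) μ := by
  have hquot : ∀ z : E, ‖truncKernel q ε z / weight q z‖ ≤ (1 / ε + 1) ^ q := fun z => by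
    rw [Real.norm_of_nonneg (div_nonneg (truncKernel_nonneg ε z) (weight_pos z).le),
      div_le_iff₀ (weight_pos z)]
    refine truncKernel_le_mul_weight hq (by positivity) fun hz => ?_
    have : 1 ≤ 1 / ε * ‖z‖ := by
      rw [one_div_mul_eq_div, one_le_div hε]
      exact hz.le
    linarith
  refine (hf.mul_bdd ((measurable_truncKernel ε).div
    continuous_weight.measurable).aestronglyMeasurable (.of_forall hquot)).congr
    (.of_forall fun z => ?_)
  simp only [Pi.div_apply]
  field_simp [(weight_pos (q := q) z).ne']

lemma integrable_posPart_mul_weight {f : E → ℝ} (hf : Integrable (fun z => f z * weight q z) μ) :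
    Integrable (fun z => (f z)⁺ * weight q z) μ := by
  refine hf.pos_part.congr (.of_forall fun z => ?_)
  simp only [posPart_def, max_mul_of_nonneg _ _ (weight_pos z).le, zero_mul]

lemma integrable_negPart_mul_weight {f : E → ℝ} (hf : Integrable (fun z => f z * weight q z) μ) :
    Integrable (fun z => (f z)⁻ * weight q z) μ := by
  simpa only [posPart_neg] using
    integrable_posPart_mul_weight (f := fun z => -f z) (by simpa only [neg_mul] using! hf.neg)

lemma integrable_abs_mul_weight {f : E → ℝ} (hf : Integrable (fun z => f z * weight q z) μ) :
    Integrable (fun z => |f z| * weight q z) μ := by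
  simpa only [norm_mul, Real.norm_eq_abs, abs_of_pos (weight_pos _)] using hf.norm

lemma tendsto_integral_norm_gt [OpensMeasurableSpace E] [NullSingletonClass μ] {f : E → ℝ}
    (hf : Integrable f μ) :
    Tendsto (fun ε : ℝ => ∫ z in {z | ε < ‖z‖}, f z ∂μ) (𝓝[>] 0) (𝓝 (∫ z, f z ∂μ)) := by
  have hmeas (ε : ℝ) : MeasurableSet {z : E | ε < ‖z‖} :=
    measurableSet_lt measurable_const measurable_norm
  simp_rw [← integral_indicator (hmeas _)]
  refine tendsto_integral_filter_of_dominated_convergence (‖f ·‖)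
    (.of_forall fun ε => hf.aestronglyMeasurable.indicator (hmeas ε))
    (.of_forall fun ε => .of_forall fun z => norm_indicator_le_norm_self f z) hf.norm ?_
  filter_upwards [Measure.ae_ne μ 0] with z hz
  refine tendsto_const_nhds.congr' ?_
  filter_upwards [mem_nhdsWithin_of_mem_nhds (Iio_mem_nhds (norm_pos_iff.2 hz))] with ε hε
  exact (indicator_of_mem (s := {z : E | ε < ‖z‖}) hε f).symm

variable [NormedSpace ℝ E] [FiniteDimensional ℝ E] [BorelSpace E] [μ.IsAddHaarMeasure]

lemma integrable_weight (hq : finrank ℝ E < q) : Integrable (weight q : E → ℝ) μ :=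
  integrable_one_add_norm hq

lemma integral_weight_pos (hq : finrank ℝ E < q) : 0 < ∫ z : E, weight q z ∂μ := by
  rw [integral_pos_iff_support_of_nonneg (fun z => (weight_pos z).le) (integrable_weight hq),
    show Function.support (weight q : E → ℝ) = univ from
      eq_univ_of_forall fun z => (weight_pos z).ne']
  exact NeZero.pos _

lemma integrable_mul_truncKernel_of_bounded (hq : finrank ℝ E < q) {ε : ℝ} (hε : 0 < ε)
    {f : E → ℝ} (hf : Measurable f) {M : ℝ} (hM : ∀ z, |f z| ≤ M) :
    Integrable (fun z => f z * truncKernel q ε z) μ :=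
  integrable_mul_truncKernel_of_mul_weight ((Nat.cast_nonneg _).trans hq.le) hε
    ((integrable_weight hq).bdd_mul hf.aestronglyMeasurable (.of_forall hM))

lemma integrable_norm_rpow_mul_weight {p : ℝ} (hp : 0 ≤ p) (hpq : finrank ℝ E < q - p) :
    Integrable (fun z : E => ‖z‖ ^ p * weight q z) μ := by
  refine (integrable_weight hpq).mono' ((continuous_norm.rpow_const fun _ => .inr hp).mul
    continuous_weight).aestronglyMeasurable (.of_forall fun z => ?_)
  rw [Real.norm_of_nonneg (mul_nonneg (by positivity) (weight_pos z).le)]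
  calc ‖z‖ ^ p * (1 + ‖z‖) ^ (-q) ≤ (1 + ‖z‖) ^ p * (1 + ‖z‖) ^ (-q) := by
        gcongr
        linarith
    _ = (1 + ‖z‖) ^ (-(q - p)) := by
        rw [← Real.rpow_add (by positivity)]
        ring_nf

lemma integrable_comp_add_smul {f : E → ℝ} (hf : Integrable f μ) (x : E) {ρ : ℝ} (hρ : 0 < ρ) :
    Integrable (fun z => f (x + ρ • z)) μ :=
  (hf.comp_add_left x).comp_smul hρ.ne'

lemma integral_comp_add_smul (f : E → ℝ) (x : E) {ρ : ℝ} (hρ : 0 < ρ) :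
    ∫ z, f (x + ρ • z) ∂μ = (ρ ^ finrank ℝ E)⁻¹ * ∫ z, f z ∂μ := by
  rw [Measure.integral_comp_smul μ (fun z => f (x + z)) ρ, integral_add_left_eq_self f x,
    abs_of_pos (by positivity), smul_eq_mul]

lemma integrable_comp_add_smul_mul_weight (hq : 0 ≤ q) {f : E → ℝ}
    (hf : Integrable (fun z => f z * weight q z) μ) (x : E) {ρ : ℝ} (hρ : 0 < ρ) :
    Integrable (fun z => f (x + ρ • z) * weight q z) μ := by
  have hquot : ∀ z : E, ‖weight q z / weight q (x + ρ • z)‖ ≤ (1 + ‖x‖ + ρ) ^ q := fun z => by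
    rw [Real.norm_of_nonneg (div_nonneg (weight_pos z).le (weight_pos _).le),
      div_le_iff₀ (weight_pos _)]
    exact weight_le_mul_weight_add_smul hq x z hρ
  have hmeas : Measurable fun z : E => weight q z / weight q (x + ρ • z) :=
    continuous_weight.measurable.div (continuous_weight.comp (by fun_prop)).measurable
  refine ((integrable_comp_add_smul hf x hρ).mul_bdd hmeas.aestronglyMeasurable
    (.of_forall hquot)).congr (.of_forall fun z => ?_)
  simp only
  field_simp [(weight_pos (q := q) (x + ρ • z)).ne']

end Integrability

/-! ### Harmonic functions of the fractional Laplacian -/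

section FracHarmonic

variable {E : Type*} [NormedAddCommGroup E] [InnerProductSpace ℝ E] [FiniteDimensional ℝ E]
  [MeasurableSpace E] [BorelSpace E] {q : ℝ} {u : E → ℝ}

/-- The fractional Laplacian of `u` at `x`, up to a constant factor, with the singularity of the
kernel `‖z‖ ^ (-q)` removed at scale `ε`. -/
noncomputable def truncFracLap (q ε : ℝ) (u : E → ℝ) (x : E) : ℝ :=
  ∫ z, (u x - u (x + z)) * truncKernel q ε z

/-- The norm of the space `L¹_s`, where `q = n + 2s`. -/
noncomputable def tailNorm (q : ℝ) (u : E → ℝ) : ℝ := ∫ y, |u y| * weight q y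

/-- Continuous functions in `L¹_s` that are `s`-harmonic at every point, in terms of the homogeneity
`q = n + 2s` of the kernel. -/
structure IsFracHarmonic (q : ℝ) (u : E → ℝ) : Prop where
  continuous : Continuous u
  integrable : Integrable fun y => u y * weight q y
  tendsto_truncFracLap : ∀ x, Tendsto (fun ε => truncFracLap q ε u x) (𝓝[>] 0) (𝓝 0)

lemma tailNorm_neg (q : ℝ) (u : E → ℝ) : tailNorm q (fun x => -u x) = tailNorm q u := by
  simp only [tailNorm, abs_neg]

lemma tailNorm_nonneg (q : ℝ) (u : E → ℝ) : 0 ≤ tailNorm q u :=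
  integral_nonneg fun y => mul_nonneg (abs_nonneg _) (weight_pos y).le

lemma tailNorm_comp_add_smul_le (hq : 0 ≤ q) (hu : Integrable fun y => u y * weight q y) (x : E)
    {ρ : ℝ} (hρ : 0 < ρ) : tailNorm q (fun z => u (x + ρ • z)) ≤
      (1 + ‖x‖ + ρ) ^ q * ((ρ ^ finrank ℝ E)⁻¹ * tailNorm q u) := by
  have hu' := integrable_comp_add_smul (integrable_abs_mul_weight hu) x hρ
  rw [tailNorm, tailNorm, ← integral_comp_add_smul (fun y => |u y| * weight q y) x hρ,
    ← integral_const_mul]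
  refine integral_mono (integrable_abs_mul_weight (integrable_comp_add_smul_mul_weight hq hu x hρ))
    (hu'.const_mul _) fun z => ?_
  have := mul_le_mul_of_nonneg_left (weight_le_mul_weight_add_smul hq x z hρ)
    (abs_nonneg (u (x + ρ • z)))
  simp only
  linarith

namespace IsFracHarmonic

lemma integrable_increment (hq : finrank ℝ E < q) (hu : IsFracHarmonic q u) {ε : ℝ} (hε : 0 < ε)
    (x : E) : Integrable fun z => (u x - u (x + z)) * truncKernel q ε z := by
  have hq0 : 0 ≤ q := (Nat.cast_nonneg _).trans hq.le
  refine integrable_mul_truncKernel_of_mul_weight hq0 hε ?_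
  have hshift := integrable_comp_add_smul_mul_weight hq0 hu.integrable x one_pos
  simpa only [sub_mul, one_smul] using! ((integrable_weight hq).const_mul (u x)).sub hshift

lemma neg (hu : IsFracHarmonic q u) : IsFracHarmonic q fun x => -u x where
  continuous := hu.continuous.neg
  integrable := by simpa only [neg_mul] using! hu.integrable.neg
  tendsto_truncFracLap x := by
    have hneg (ε : ℝ) : truncFracLap q ε (fun x => -u x) x = -truncFracLap q ε u x := by
      rw [truncFracLap, truncFracLap, ← integral_neg]
      congr 1 with z
      ring
    simpa only [hneg, neg_zero] using (hu.tendsto_truncFracLap x).neg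

lemma add_const (hq : finrank ℝ E < q) (hu : IsFracHarmonic q u) (c : ℝ) :
    IsFracHarmonic q fun x => u x + c where
  continuous := hu.continuous.add_const c
  integrable := by
    simpa only [add_mul] using! hu.integrable.add ((integrable_weight hq).const_mul c)
  tendsto_truncFracLap x := by
    simpa only [truncFracLap, add_sub_add_right_eq_sub] using hu.tendsto_truncFracLap x

lemma comp_add_smul (hq : 0 ≤ q) (hu : IsFracHarmonic q u) (x₀ : E) {ρ : ℝ} (hρ : 0 < ρ) :
    IsFracHarmonic q fun x => u (x₀ + ρ • x) where
  continuous := hu.continuous.comp (by fun_prop)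
  integrable := integrable_comp_add_smul_mul_weight hq hu.integrable x₀ hρ
  tendsto_truncFracLap x := by
    have hscale (ε : ℝ) : truncFracLap q ε (fun x => u (x₀ + ρ • x)) x =
        ρ ^ q * (ρ ^ finrank ℝ E)⁻¹ * truncFracLap q (ρ * ε) u (x₀ + ρ • x) := by
      rw [truncFracLap, truncFracLap, mul_assoc, ← integral_comp_add_smul _ 0 hρ,
        ← integral_const_mul]
      congr 1 with z
      rw [zero_add, truncKernel_smul hρ, smul_add, add_assoc, Real.rpow_neg hρ.le]
      field_simp
    have hρε : Tendsto (fun ε : ℝ => ρ * ε) (𝓝[>] 0) (𝓝[>] 0) := by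
      refine tendsto_nhdsWithin_iff.2 ⟨?_, eventually_mem_nhdsWithin.mono fun ε hε => mul_pos hρ hε⟩
      simpa using ((continuous_const_mul ρ).tendsto 0).mono_left nhdsWithin_le_nhds
    simpa only [hscale, mul_zero, Function.comp_def] using
      ((hu.tendsto_truncFracLap (x₀ + ρ • x)).comp hρε).const_mul (ρ ^ q * (ρ ^ finrank ℝ E)⁻¹)

lemma of_tendsto_setIntegral (hq : 0 ≤ q) (hcont : Continuous u)
    (hint : Integrable fun y : E => |u y| / (1 + ‖y‖ ^ q))
    (hlim : ∀ x : E, Tendsto (fun ε : ℝ => ∫ y in {y : E | ε < ‖y - x‖},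
      (u x - u y) / ‖x - y‖ ^ q) (𝓝[>] (0 : ℝ)) (𝓝 0)) : IsFracHarmonic q u where
  continuous := hcont
  integrable := by
    refine (hint.const_mul 2).mono' (hcont.mul continuous_weight).aestronglyMeasurable
      (.of_forall fun y => ?_)
    have h1 : 1 ≤ (1 + ‖y‖) ^ q := Real.one_le_rpow (by linarith [norm_nonneg y]) hq
    have h2 : ‖y‖ ^ q ≤ (1 + ‖y‖) ^ q := Real.rpow_le_rpow (by positivity) (by linarith) hq
    rw [norm_mul, Real.norm_of_nonneg (weight_pos y).le, Real.norm_eq_abs, weight,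
      Real.rpow_neg (by positivity), ← div_eq_mul_inv, ← mul_div_assoc,
      div_le_div_iff₀ (by positivity) (by positivity), mul_comm 2, mul_assoc]
    gcongr
    linarith
  tendsto_truncFracLap x := by
    refine (hlim x).congr fun ε => ?_
    rw [truncFracLap, ← integral_indicator (measurableSet_lt measurable_const (by fun_prop)),
      ← integral_add_left_eq_self _ x]
    congr 1 with z
    simp only [indicator_apply, mem_ofPred_eq, truncKernel, add_sub_cancel_left, mul_ite, mul_zero,
      sub_add_cancel_left, norm_neg, Real.rpow_neg (norm_nonneg z), div_eq_mul_inv]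

end IsFracHarmonic

end FracHarmonic

/-! ### A paraboloid barrier -/

section Barrier

lemma two_mul_integral_mul_truncKernel_le {E : Type*} [NormedAddCommGroup E] [MeasurableSpace E]
    [BorelSpace E] {μ : Measure E} [μ.IsNegInvariant] {q ε : ℝ} {f g : E → ℝ}
    (hf : Integrable (fun z => f z * truncKernel q ε z) μ) (hg : Integrable g μ)
    (hfg : ∀ z, (f z + f (-z)) * truncKernel q ε z ≤ g z) :
    2 * ∫ z, f z * truncKernel q ε z ∂μ ≤ ∫ z, g z ∂μ := by
  have hker (z : E) : truncKernel q ε (-z) = truncKernel q ε z :=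
    truncKernel_congr_norm (norm_neg z) ε
  have hf' : Integrable (fun z => f (-z) * truncKernel q ε z) μ := by
    simpa only [hker] using hf.comp_neg
  have hsymm : ∫ z, f (-z) * truncKernel q ε z ∂μ = ∫ z, f z * truncKernel q ε z ∂μ := by
    simpa only [hker] using integral_neg_eq_self (fun z => f z * truncKernel q ε z) μ
  calc 2 * ∫ z, f z * truncKernel q ε z ∂μ
      = ∫ z, f z * truncKernel q ε z + f (-z) * truncKernel q ε z ∂μ := by
        rw [integral_add hf hf', hsymm, two_mul]
    _ ≤ ∫ z, g z ∂μ := integral_mono (hf.add hf') hg fun z => by simpa only [add_mul] using hfg z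

lemma integrable_norm_rpow_indicator_ball {E : Type*} [NormedAddCommGroup E] [NormedSpace ℝ E]
    [FiniteDimensional ℝ E] [MeasurableSpace E] [BorelSpace E] [Nontrivial E] (μ : Measure E)
    [μ.IsAddHaarMeasure] {p : ℝ} (hp : -finrank ℝ E < p) (r : ℝ) :
    Integrable (fun z : E => if ‖z‖ < r then ‖z‖ ^ p else 0) μ := by
  rcases le_or_gt r 0 with hr | hr
  · simp [(hr.trans (norm_nonneg _)).not_gt]
  refine (integrable_fun_norm_addHaar μ (f := fun t : ℝ => if t < r then t ^ p else 0)).2 ?_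
  have hrad : IntegrableOn (fun t : ℝ => t ^ (finrank ℝ E - 1 + p)) (Ioo 0 r) := by
    rw [intervalIntegral.integrableOn_Ioo_rpow_iff hr]
    linarith
  refine (hrad.integrable_indicator measurableSet_Ioo).integrableOn.congr_fun (fun t ht => ?_)
    measurableSet_Ioi
  have ht : 0 < t := ht
  simp only [smul_eq_mul, indicator, mem_Ioo, ht, true_and, mul_ite, mul_zero]
  rw [Real.rpow_add ht, ← Nat.cast_pred finrank_pos, Real.rpow_natCast]

variable {E : Type*} [NormedAddCommGroup E] [InnerProductSpace ℝ E] {q : ℝ}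

/-- A paraboloid of slope `a` near the origin, extended by the constant `1`; it dominates the
increments of the smooth functions that are used to touch a solution. -/
noncomputable def barrier (a z : E) : ℝ := if ‖z‖ < 1 / 2 then inner ℝ a z + ‖z‖ ^ 2 else 1

lemma abs_barrier_le (a z : E) : |barrier a z| ≤ ‖a‖ + 1 := by
  unfold barrier
  split_ifs with h
  · calc |inner ℝ a z + ‖z‖ ^ 2| ≤ ‖a‖ * ‖z‖ + ‖z‖ ^ 2 :=
          (abs_add_le _ _).trans (add_le_add (abs_real_inner_le_norm a z) (abs_of_nonneg
            (by positivity)).le)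
      _ ≤ ‖a‖ + 1 := by nlinarith [norm_nonneg a, norm_nonneg z]
  · simp

lemma barrier_add_barrier_neg (a z : E) :
    barrier a z + barrier a (-z) = if ‖z‖ < 1 / 2 then 2 * ‖z‖ ^ 2 else 2 := by
  unfold barrier
  rw [norm_neg, inner_neg_right]
  split_ifs <;> ring

variable [MeasurableSpace E] [BorelSpace E]

lemma measurable_barrier (a : E) : Measurable (barrier a) :=
  Measurable.ite (measurableSet_lt measurable_norm measurable_const) (by fun_prop) measurable_const

variable [FiniteDimensional ℝ E]

lemma integrable_barrier_mul_truncKernel (hq : finrank ℝ E < q) (a : E) {ε : ℝ} (hε : 0 < ε) :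
    Integrable fun z => barrier a z * truncKernel q ε z :=
  integrable_mul_truncKernel_of_bounded hq hε (measurable_barrier a) (abs_barrier_le a)

lemma exists_integral_barrier_le [Nontrivial E] (hq : finrank ℝ E < q)
    (hq' : q < finrank ℝ E + 2) :
    ∃ C : ℝ, 0 ≤ C ∧ ∀ (a : E) (ε : ℝ), 0 < ε → ∫ z, barrier a z * truncKernel q ε z ≤ C := by
  have hq0 : 0 ≤ q := (Nat.cast_nonneg _).trans hq.le
  have hw (z : E) : 0 < weight q z := weight_pos z
  let g : E → ℝ := fun z =>
    2 * ((if ‖z‖ < 1 / 2 then ‖z‖ ^ (2 - q) else 0) + 3 ^ q * weight q z)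
  have hg : Integrable g :=
    ((integrable_norm_rpow_indicator_ball volume (by linarith) _).add
      ((integrable_weight hq).const_mul _)).const_mul 2
  refine ⟨(∫ z, g z) / 2, div_nonneg (integral_nonneg fun z => ?_) two_pos.le, fun a ε hε => ?_⟩
  · have := hw z
    simp only [Pi.zero_apply, g]
    positivity
  rw [le_div_iff₀' two_pos]
  refine two_mul_integral_mul_truncKernel_le (integrable_barrier_mul_truncKernel hq a hε) hg
    fun z => ?_
  rw [barrier_add_barrier_neg]
  by_cases hz : ‖z‖ < 1 / 2
  · have hquad : ‖z‖ ^ 2 * truncKernel q ε z ≤ ‖z‖ ^ (2 - q) := by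
      by_cases hεz : ε < ‖z‖
      · rw [truncKernel_of_lt hεz, ← Real.rpow_natCast, ← Real.rpow_add (hε.trans hεz),
          Nat.cast_ofNat, sub_eq_add_neg]
      · rw [truncKernel, if_neg hεz, mul_zero]
        positivity
    have : 0 ≤ 3 ^ q * weight q z := mul_nonneg (by positivity) (hw z).le
    simp only [g, hz, if_true]
    linarith
  · simp only [g, hz, if_false]
    have := truncKernel_le_mul_weight hq0 (c := 3) (ε := ε) (y := z) (z := z) three_pos
      fun _ => by linarith
    linarith

end Barrier

/-! ### Weak Harnack inequality -/

section Bump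

variable {E : Type*} [NormedAddCommGroup E]

/-- The truncated paraboloid with which nonnegative solutions are touched from below. -/
noncomputable def bump (y : E) : ℝ := max (1 - 4 * ‖y‖ ^ 2) 0

lemma bump_nonneg (y : E) : 0 ≤ bump y := le_max_right _ _

lemma bump_zero : bump (0 : E) = 1 := by
  simp [bump]

lemma bump_le_one (y : E) : bump y ≤ 1 :=
  max_le (by linarith [sq_nonneg ‖y‖]) zero_le_one

lemma bump_of_norm_ge {y : E} (hy : 1 / 2 ≤ ‖y‖) : bump y = 0 :=
  max_eq_right (by nlinarith)

end Bump

section WeakHarnack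

variable {E : Type*} [NormedAddCommGroup E] [InnerProductSpace ℝ E]

lemma bump_sub_bump_add_le {x : E} (hx : ‖x‖ ≤ 1 / 2) (z : E) :
    bump x - bump (x + z) ≤ 4 * barrier ((2 : ℝ) • x) z := by
  unfold barrier
  split_ifs with hz
  · have hbx : bump x = 1 - 4 * ‖x‖ ^ 2 := max_eq_left (by nlinarith [norm_nonneg x])
    have hbxz : 1 - 4 * ‖x + z‖ ^ 2 ≤ bump (x + z) := le_max_left _ _
    rw [norm_add_sq_real] at hbxz
    rw [real_inner_smul_left, hbx]
    linarith
  · linarith [bump_le_one x, bump_nonneg (x + z)]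

lemma exists_contact_point [FiniteDimensional ℝ E] {v : E → ℝ} (hv : Continuous v)
    (hpos : ∀ y, ‖y‖ ≤ 1 → 0 ≤ v y) :
    ∃ x, ‖x‖ ≤ 1 / 2 ∧ v x ≤ v 0 * bump x ∧
      ∀ y, ‖y‖ ≤ 1 → v x - v 0 * bump x ≤ v y - v 0 * bump y := by
  have hcont : Continuous fun x => v x - v 0 * bump x := by
    unfold bump
    fun_prop
  obtain ⟨x, hx, hmin⟩ := (isCompact_closedBall (0 : E) (1 / 2)).exists_isMinOn
    (nonempty_closedBall.2 (by norm_num)) hcont.continuousOn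
  have hx0 : v x - v 0 * bump x ≤ 0 := by
    simpa [bump_zero] using hmin (mem_closedBall_self (by norm_num))
  refine ⟨x, mem_closedBall_zero_iff.1 hx, by linarith, fun y hy => ?_⟩
  rcases le_or_gt ‖y‖ (1 / 2) with hy' | hy'
  · exact hmin (mem_closedBall_zero_iff.2 hy')
  · rw [bump_of_norm_ge hy'.le]
    linarith [hpos y hy]

lemma posPart_sub_sub_negPart_mul_le {a t c w k b : ℝ} (ht : 0 ≤ t) (hw : 0 ≤ w) (hwk : w ≤ k)
    (hpos : 0 ≤ a → 0 ≤ b ∧ a - t ≤ b) (hneg : a < 0 → a ≤ b ∧ k ≤ c * w) :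
    (a⁺ - t - c * a⁻) * w ≤ b * k := by
  rcases le_or_gt 0 a with ha | ha
  · obtain ⟨hb, hab⟩ := hpos ha
    rw [posPart_of_nonneg ha, negPart_of_nonneg ha, mul_zero, sub_zero]
    exact mul_le_mul hab hwk hw hb
  · obtain ⟨hab, hkw⟩ := hneg ha
    rw [posPart_of_nonpos ha.le, negPart_of_nonpos ha.le]
    nlinarith [mul_le_mul_of_nonneg_left hkw (neg_nonneg.2 ha.le),
      mul_le_mul_of_nonneg_right hab (hw.trans hwk), mul_nonneg ht hw]

lemma posPart_sub_sub_negPart_mul_weight_le {q : ℝ} (hq : 0 ≤ q) {v : E → ℝ}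
    (hpos : ∀ y, ‖y‖ ≤ 1 → 0 ≤ v y) {x : E} (hx : ‖x‖ ≤ 1 / 2) (hvx : v x ≤ v 0 * bump x)
    (hmin : ∀ y, ‖y‖ ≤ 1 → v x - v 0 * bump x ≤ v y - v 0 * bump y) {z : E} (hz : z ≠ 0) :
    ((v (x + z))⁺ - v 0 - 4 ^ q * (v (x + z))⁻) * weight q (x + z) ≤
      (v (x + z) - v x + v 0 * (4 * barrier ((2 : ℝ) • x) z)) * ‖z‖ ^ (-q) := by
  have hv0 : 0 ≤ v 0 := hpos 0 (by simp)
  have hz0 : 0 < ‖z‖ := norm_pos_iff.2 hz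
  have hxz : ‖x + z‖ ≤ ‖x‖ + ‖z‖ := norm_add_le x z
  have hzx : ‖z‖ ≤ ‖x + z‖ + ‖x‖ := by simpa using norm_sub_le (x + z) x
  have hweight : weight q (x + z) ≤ ‖z‖ ^ (-q) :=
    Real.rpow_le_rpow_of_nonpos hz0 (by linarith) (neg_nonpos.2 hq)
  calc ((v (x + z))⁺ - v 0 - 4 ^ q * (v (x + z))⁻) * weight q (x + z)
      ≤ (v (x + z) - v x + v 0 * (bump x - bump (x + z))) * ‖z‖ ^ (-q) := by
        have hbump : v 0 * bump (x + z) ≤ v 0 := mul_le_of_le_one_right hv0 (bump_le_one _)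
        have houter (hxz1 : 1 < ‖x + z‖) : v 0 * bump (x + z) = 0 := by
          rw [bump_of_norm_ge (by linarith), mul_zero]
        refine posPart_sub_sub_negPart_mul_le hv0 (weight_pos _).le hweight
          (fun hv => ⟨?_, by linarith⟩) fun hv => ?_
        · rcases le_or_gt ‖x + z‖ 1 with h | h
          · linarith [hmin _ h]
          · linarith [houter h]
        · have h1 : 1 < ‖x + z‖ := by
            by_contra! h
            exact hv.not_ge (hpos _ h)
          exact ⟨by linarith [houter h1],
            rpow_neg_le_mul_rpow_neg hq (by positivity) hz0 four_pos (by linarith)⟩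
    _ ≤ _ := by
        gcongr
        exact bump_sub_bump_add_le hx z

variable [FiniteDimensional ℝ E] [MeasurableSpace E] [BorelSpace E] [Nontrivial E] {q : ℝ}

lemma exists_integral_le_of_touching (hq : finrank ℝ E < q) (hq' : q < finrank ℝ E + 2) :
    ∃ C : ℝ, 0 ≤ C ∧ ∀ {v : E → ℝ}, IsFracHarmonic q v → ∀ (x a : E) {t : ℝ}, 0 ≤ t →
      ∀ {F : E → ℝ}, Integrable F →
        (∀ z ≠ 0, F z ≤ (v (x + z) - v x + t * barrier a z) * ‖z‖ ^ (-q)) →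
          ∫ z, F z ≤ t * C := by
  obtain ⟨C, hC, hbarrier⟩ := exists_integral_barrier_le hq hq'
  refine ⟨C, hC, fun {v} hv x a t ht F hF hle => ?_⟩
  have hlim := (hv.tendsto_truncFracLap x).neg.add_const (t * C)
  rw [neg_zero, zero_add] at hlim
  refine le_of_tendsto_of_tendsto (tendsto_integral_norm_gt hF) hlim ?_
  filter_upwards [self_mem_nhdsWithin] with ε hε
  have hε : 0 < ε := hε
  have hincr := (hv.integrable_increment hq hε x).neg
  have hbar := (integrable_barrier_mul_truncKernel hq a hε).const_mul t
  have hmeas : MeasurableSet {z : E | ε < ‖z‖} :=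
    measurableSet_lt measurable_const measurable_norm
  calc ∫ z in {z | ε < ‖z‖}, F z
      ≤ ∫ z, -((v x - v (x + z)) * truncKernel q ε z) + t * (barrier a z * truncKernel q ε z) := by
        rw [← integral_indicator hmeas]
        refine integral_mono (hF.indicator hmeas) (hincr.add hbar) fun z => ?_
        refine indicator_apply_le' (fun hz => ?_) fun hz => ?_
        · have hz : ε < ‖z‖ := hz
          simp only [truncKernel_of_lt hz]
          linarith [hle z (norm_pos_iff.1 (hε.trans hz))]
        · have hz : ¬ε < ‖z‖ := hz
          simp [truncKernel, hz]
    _ = -truncFracLap q ε v x + t * ∫ z, barrier a z * truncKernel q ε z := by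
        rw [truncFracLap, ← integral_neg, ← integral_const_mul]
        exact integral_add hincr hbar
    _ ≤ -truncFracLap q ε v x + t * C := by
        gcongr
        exact hbarrier a ε hε

theorem weak_harnack (hq : finrank ℝ E < q) (hq' : q < finrank ℝ E + 2) :
    ∃ C : ℝ, 0 < C ∧ ∀ {v : E → ℝ}, IsFracHarmonic q v → (∀ y, ‖y‖ ≤ 1 → 0 ≤ v y) →
      ∫ y, (v y)⁺ * weight q y ≤ C * (v 0 + ∫ y, (v y)⁻ * weight q y) := by
  have hq0 : 0 ≤ q := (Nat.cast_nonneg _).trans hq.le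
  obtain ⟨C, hC, htouch⟩ := exists_integral_le_of_touching (E := E) hq hq'
  have hweight : 0 < ∫ y : E, weight q y := integral_weight_pos hq
  refine ⟨4 * C + (∫ y : E, weight q y) + 4 ^ q, by positivity, fun {v} hv hpos => ?_⟩
  have hv0 : 0 ≤ v 0 := hpos 0 (by simp)
  obtain ⟨x, hx, hvx, hmin⟩ := exists_contact_point hv.continuous hpos
  have hposPart := integrable_posPart_mul_weight hv.integrable
  have hconst : Integrable fun y : E => v 0 * weight q y := (integrable_weight hq).const_mul _
  have hnegPart := (integrable_negPart_mul_weight hv.integrable).const_mul (4 ^ q)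
  have hF : Integrable fun y => ((v y)⁺ - v 0 - 4 ^ q * (v y)⁻) * weight q y := by
    simpa only [sub_mul, mul_assoc] using! (hposPart.sub hconst).sub hnegPart
  have hsplit : ∫ y, ((v y)⁺ - v 0 - 4 ^ q * (v y)⁻) * weight q y =
      (∫ y, (v y)⁺ * weight q y) - v 0 * (∫ y : E, weight q y) -
        4 ^ q * ∫ y, (v y)⁻ * weight q y := by
    simp_rw [sub_mul, mul_assoc, ← integral_const_mul]
    rw [← integral_sub hposPart hconst]
    exact integral_sub (hposPart.sub hconst) hnegPart
  have hle := htouch hv x ((2 : ℝ) • x) (mul_nonneg hv0 four_pos.le) (hF.comp_add_left x)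
    fun z hz => by
      simpa only [mul_assoc] using posPart_sub_sub_negPart_mul_weight_le hq0 hpos hx hvx hmin hz
  rw [integral_add_left_eq_self (fun y => ((v y)⁺ - v 0 - 4 ^ q * (v y)⁻) * weight q y) x,
    hsplit] at hle
  have hneg : 0 ≤ ∫ y, (v y)⁻ * weight q y :=
    integral_nonneg fun y => mul_nonneg (negPart_nonneg _) (weight_pos y).le
  have h4 : (0 : ℝ) ≤ 4 ^ q * v 0 := by positivity
  linarith [mul_nonneg hC hneg, mul_nonneg hweight.le hneg]

end WeakHarnack

/-! ### Local boundedness -/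

section LocalBound

lemma exists_one_sub_pow_ge (n : ℕ) {b : ℝ} (hb : b < 1) :
    ∃ θ : ℝ, 0 < θ ∧ θ < 1 ∧ b ≤ (1 - θ) ^ n := by
  have hcont : ContinuousAt (fun θ : ℝ => (1 - θ) ^ n) 0 := by fun_prop
  have hev : ∀ᶠ θ in 𝓝[>] (0 : ℝ), b < (1 - θ) ^ n :=
    (hcont.eventually_const_lt (by simpa using hb)).filter_mono nhdsWithin_le_nhds
  obtain ⟨θ, hθb, hθ⟩ := (hev.and (Ioo_mem_nhdsGT one_pos)).exists
  exact ⟨θ, hθ.1, hθ.2, hθb.le⟩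

variable {E : Type*} [NormedAddCommGroup E]

lemma exists_doubling_point [ProperSpace E] {v : E → ℝ} (hv : Continuous v) {n : ℕ} (hn : n ≠ 0)
    {x : E} (hx : ‖x‖ ≤ 2) (hvx : 0 < v x) :
    ∃ (x₀ : E) (r : ℝ), 0 < r ∧ r ≤ 4 ∧ ‖x₀‖ ≤ 4 ∧ v x ≤ r ^ n * v x₀ ∧
      ∀ θ < (1 : ℝ), ∀ y, ‖y - x₀‖ ≤ θ * r → (1 - θ) ^ n * v y ≤ v x₀ := by
  have hcont : Continuous fun y : E => (4 - ‖y‖) ^ n * v y := by fun_prop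
  obtain ⟨x₀, hx₀, hmax⟩ := (isCompact_closedBall (0 : E) 4).exists_isMaxOn
    (nonempty_closedBall.2 four_pos.le) hcont.continuousOn
  have hmax : ∀ y, ‖y‖ ≤ 4 → (4 - ‖y‖) ^ n * v y ≤ (4 - ‖x₀‖) ^ n * v x₀ :=
    fun y hy => hmax (mem_closedBall_zero_iff.2 hy)
  have hx₀ : ‖x₀‖ ≤ 4 := mem_closedBall_zero_iff.1 hx₀
  have hle : v x ≤ (4 - ‖x₀‖) ^ n * v x₀ :=
    (le_mul_of_one_le_left hvx.le (one_le_pow₀ (by linarith))).trans (hmax x (by linarith))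
  have hr : 0 < 4 - ‖x₀‖ := by
    refine (sub_nonneg.2 hx₀).lt_of_ne fun h => ?_
    rw [← h, zero_pow hn, zero_mul] at hle
    linarith
  have hvx₀ : 0 < v x₀ := pos_of_mul_pos_right (hvx.trans_le hle) (by positivity)
  refine ⟨x₀, 4 - ‖x₀‖, hr, by linarith [norm_nonneg x₀], hx₀, hle, fun θ hθ y hy => ?_⟩
  rcases le_or_gt (v y) 0 with hvy | hvy
  · exact (mul_nonpos_of_nonneg_of_nonpos (pow_nonneg (by linarith) n) hvy).trans hvx₀.le
  have hdist : (1 - θ) * (4 - ‖x₀‖) ≤ 4 - ‖y‖ := by linarith [norm_le_norm_add_norm_sub' y x₀]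
  have hbase : 0 ≤ (1 - θ) * (4 - ‖x₀‖) := mul_nonneg (by linarith) hr.le
  refine le_of_mul_le_mul_left ?_ (pow_pos hr n)
  calc (4 - ‖x₀‖) ^ n * ((1 - θ) ^ n * v y) = ((1 - θ) * (4 - ‖x₀‖)) ^ n * v y := by
        rw [mul_pow]
        ring
    _ ≤ (4 - ‖y‖) ^ n * v y := by gcongr
    _ ≤ (4 - ‖x₀‖) ^ n * v x₀ := hmax y (by linarith)

variable [InnerProductSpace ℝ E] [FiniteDimensional ℝ E] [MeasurableSpace E] [BorelSpace E]
  [Nontrivial E] {q : ℝ}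

lemma exists_le_mul_tailNorm_of_le_mul (hq : finrank ℝ E < q) (hq' : q < finrank ℝ E + 2) :
    ∃ a C : ℝ, 1 < a ∧ 0 < C ∧ ∀ {f : E → ℝ}, IsFracHarmonic q f → 0 < f 0 →
      (∀ y, ‖y‖ ≤ 1 → f y ≤ a * f 0) → f 0 ≤ C * tailNorm q f := by
  obtain ⟨C, hC, hharnack⟩ := weak_harnack (E := E) hq hq'
  have hwint : Integrable (weight q : E → ℝ) := integrable_weight hq
  have hI : 0 < ∫ y : E, weight q y := integral_weight_pos hq
  set I := ∫ y : E, weight q y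
  set a := 1 + I / (2 * C) with ha
  have ha0 : 1 < a := lt_add_of_pos_right 1 (by positivity)
  refine ⟨a, 2 * (C + 1) / I, ha0, by positivity, fun {f} hf hf0 hle => ?_⟩
  have hg : IsFracHarmonic q fun y => -f y + a * f 0 := hf.neg.add_const hq _
  have habs := integrable_abs_mul_weight hf.integrable
  have hlower : a * f 0 * I - tailNorm q f ≤ ∫ y, (-f y + a * f 0)⁺ * weight q y := by
    rw [← integral_const_mul, tailNorm, ← integral_sub (hwint.const_mul _) habs]
    refine integral_mono ((hwint.const_mul _).sub habs)
      (integrable_posPart_mul_weight hg.integrable) fun z => ?_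
    simp only [← sub_mul]
    refine mul_le_mul_of_nonneg_right (le_trans ?_ (le_posPart _)) (weight_pos z).le
    linarith [le_abs_self (f z)]
  have hupper : ∫ y, (-f y + a * f 0)⁻ * weight q y ≤ tailNorm q f := by
    refine integral_mono (integrable_negPart_mul_weight hg.integrable) habs fun z => ?_
    refine mul_le_mul_of_nonneg_right (sup_le ?_ (abs_nonneg _)) (weight_pos z).le
    linarith [le_abs_self (f z), mul_pos (one_pos.trans ha0) hf0]
  have hmain := hharnack hg fun y hy => by linarith [hle y hy]
  have hCa : C * a = C + I / 2 := by
    rw [ha]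
    field_simp
  rw [div_mul_eq_mul_div, le_div_iff₀ hI]
  have haI : f 0 * I ≤ a * f 0 * I := by
    nlinarith [mul_pos hf0 hI]
  nlinarith [mul_le_mul_of_nonneg_left hupper hC.le, congrArg (· * f 0) hCa]

lemma exists_abs_le_mul_tailNorm (hq : finrank ℝ E < q) (hq' : q < finrank ℝ E + 2) :
    ∃ D : ℝ, 0 < D ∧ ∀ {v : E → ℝ}, IsFracHarmonic q v → ∀ {x : E}, ‖x‖ ≤ 2 →
      |v x| ≤ D * tailNorm q v := by
  have hq0 : 0 ≤ q := (Nat.cast_nonneg _).trans hq.le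
  obtain ⟨a, C, ha, hC, hbound⟩ := exists_le_mul_tailNorm_of_le_mul (E := E) hq hq'
  obtain ⟨θ, hθ, hθ', hθa⟩ := exists_one_sub_pow_ge (finrank ℝ E) (inv_lt_one_of_one_lt₀ ha)
  let D := C * 9 ^ q * (θ ^ finrank ℝ E)⁻¹
  suffices hle : ∀ {v : E → ℝ}, IsFracHarmonic q v → ∀ {x : E}, ‖x‖ ≤ 2 → v x ≤ D * tailNorm q v by
    refine ⟨D, by positivity, fun {v} hv {x} hx => abs_le'.2 ⟨hle hv hx, ?_⟩⟩
    simpa only [tailNorm_neg] using hle hv.neg hx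
  intro v hv x hx
  rcases le_or_gt (v x) 0 with hvx | hvx
  · exact hvx.trans (mul_nonneg (by positivity) (tailNorm_nonneg q v))
  obtain ⟨x₀, r, hr, hr4, hx₀, hvx₀, hmax⟩ :=
    exists_doubling_point hv.continuous (finrank_pos (R := ℝ) (M := E)).ne' hx hvx
  have hv₀ : 0 < v x₀ := pos_of_mul_pos_right (hvx.trans_le hvx₀) (by positivity)
  have hρ : 0 < θ * r := mul_pos hθ hr
  have hρ4 : θ * r ≤ 4 := by nlinarith
  have hscaled := hbound (hv.comp_add_smul hq0 x₀ hρ) (by simpa using hv₀) fun y hy => by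
    have hdist : ‖x₀ + (θ * r) • y - x₀‖ ≤ θ * r := by
      rw [add_sub_cancel_left, norm_smul, Real.norm_of_nonneg hρ.le]
      exact mul_le_of_le_one_right hρ.le hy
    have hpow := hmax θ hθ' _ hdist
    rw [smul_zero, add_zero, ← inv_mul_le_iff₀ (by positivity)]
    rcases le_or_gt (v (x₀ + (θ * r) • y)) 0 with hneg | hnonneg
    · exact (mul_nonpos_of_nonneg_of_nonpos (by positivity) hneg).trans hv₀.le
    · exact (mul_le_mul_of_nonneg_right hθa hnonneg.le).trans hpow
  have htail := tailNorm_nonneg q v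
  rw [smul_zero, add_zero] at hscaled
  calc v x ≤ r ^ finrank ℝ E * v x₀ := hvx₀
    _ ≤ r ^ finrank ℝ E * (C * ((1 + ‖x₀‖ + θ * r) ^ q *
          (((θ * r) ^ finrank ℝ E)⁻¹ * tailNorm q v))) := by
        gcongr
        exact hscaled.trans (by gcongr; exact tailNorm_comp_add_smul_le hq0 hv.integrable x₀ hρ)
    _ ≤ r ^ finrank ℝ E * (C * (9 ^ q * (((θ * r) ^ finrank ℝ E)⁻¹ * tailNorm q v))) := by
        gcongr
        linarith
    _ = D * tailNorm q v := by
        simp only [D, mul_pow]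
        field_simp

end LocalBound

/-! ### Concave profiles for the coupling -/

section Profile

/-- The moduli of continuity `φ` that the coupling method can establish for a kernel of order `α`:
concave functions whose second differences at `r`, with increments comparable to `r`, are at most
`-c * r ^ α`. -/
structure IsCouplingProfile (α : ℝ) (φ : ℝ → ℝ) : Prop where
  continuous : Continuous φ
  map_zero : φ 0 = 0
  pos_of_mem : ∀ r ∈ Ioc (0 : ℝ) 4, 0 < φ r
  concaveOn : ConcaveOn ℝ (Ici 0) φ
  exists_second_difference_le : ∃ c : ℝ, 0 < c ∧ ∀ r ∈ Ioo (0 : ℝ) (1 / 2),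
    ∀ τ ∈ Icc (1 / 8 : ℝ) (3 / 8), φ (r + r * τ) + φ (r - r * τ) + c * r ^ α ≤ 2 * φ r

lemma map_add_add_map_sub_le_of_concaveOn {s : Set ℝ} {f : ℝ → ℝ} (hf : ConcaveOn ℝ s f)
    {m h : ℝ} (hadd : m + h ∈ s) (hsub : m - h ∈ s) : f (m + h) + f (m - h) ≤ 2 * f m := by
  have hmid := hf.2 hadd hsub one_half_pos.le one_half_pos.le (add_halves 1)
  simp only [smul_eq_mul] at hmid
  rw [show 1 / 2 * (m + h) + 1 / 2 * (m - h) = m by ring] at hmid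
  linarith

lemma map_add_add_map_sub_lt_of_strictConcaveOn {s : Set ℝ} {f : ℝ → ℝ}
    (hf : StrictConcaveOn ℝ s f) {m h : ℝ} (hadd : m + h ∈ s) (hsub : m - h ∈ s) (hh : h ≠ 0) :
    f (m + h) + f (m - h) < 2 * f m := by
  have hne : m + h ≠ m - h := fun h' => hh (by linarith)
  have hmid := hf.2 hadd hsub hne one_half_pos one_half_pos (add_halves 1)
  simp only [smul_eq_mul] at hmid
  rw [show 1 / 2 * (m + h) + 1 / 2 * (m - h) = m by ring] at hmid
  linarith

lemma exists_second_difference_gap {f : ℝ → ℝ} (hf : StrictConcaveOn ℝ (Ici 0) f)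
    (hcont : Continuous f) :
    ∃ c : ℝ, 0 < c ∧ ∀ τ ∈ Icc (1 / 8 : ℝ) (3 / 8), c ≤ 2 * f 1 - f (1 + τ) - f (1 - τ) := by
  refine isCompact_Icc.exists_forall_le' (by fun_prop) fun τ hτ => ?_
  have hlt := map_add_add_map_sub_lt_of_strictConcaveOn hf (m := 1) (h := τ)
    (mem_Ici.2 (by linarith [hτ.1])) (mem_Ici.2 (by linarith [hτ.2]))
    (by linarith [hτ.1] : 0 < τ).ne'
  linarith

lemma rpow_second_difference (p : ℝ) {r τ : ℝ} (hr : 0 ≤ r) (hτ : τ ∈ Icc (1 / 8 : ℝ) (3 / 8)) :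
    2 * r ^ p - (r + r * τ) ^ p - (r - r * τ) ^ p =
      r ^ p * (2 * 1 ^ p - (1 + τ) ^ p - (1 - τ) ^ p) := by
  rw [← mul_one_add, ← mul_one_sub, Real.mul_rpow hr (by linarith [hτ.1]),
    Real.mul_rpow hr (by linarith [hτ.2]), Real.one_rpow]
  ring

lemma isCouplingProfile_rpow {p α : ℝ} (hp : 0 < p) (hp' : p < 1) (hpα : p ≤ α) :
    IsCouplingProfile α (· ^ p) where
  continuous := Real.continuous_rpow_const hp.le
  map_zero := Real.zero_rpow hp.ne'
  pos_of_mem r hr := Real.rpow_pos_of_pos hr.1 p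
  concaveOn := Real.concaveOn_rpow hp.le hp'.le
  exists_second_difference_le := by
    obtain ⟨c, hc, hgap⟩ := exists_second_difference_gap (Real.strictConcaveOn_rpow hp hp')
      (Real.continuous_rpow_const hp.le)
    refine ⟨c, hc, fun r hr τ hτ => ?_⟩
    have hle : r ^ α ≤ r ^ p :=
      Real.rpow_le_rpow_of_exponent_ge hr.1 (by linarith [hr.2]) hpα
    have hscaled := mul_le_mul_of_nonneg_left (hgap τ hτ) (Real.rpow_nonneg hr.1.le p)
    rw [← rpow_second_difference p hr.1.le hτ] at hscaled
    linarith [mul_le_mul_of_nonneg_left hle hc.le]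

lemma isCouplingProfile_linear_sub_rpow {α : ℝ} (hα : 1 < α) (hα' : α < 2) :
    IsCouplingProfile α fun r => 4 * r - r ^ α := by
  have hrpow : Continuous fun r : ℝ => -r ^ α := (Real.continuous_rpow_const (by linarith)).neg
  have hconcave : StrictConcaveOn ℝ (Ici 0) fun r : ℝ => -r ^ α := (strictConvexOn_rpow hα).neg
  refine ⟨(continuous_const_mul 4).add hrpow, by simp [(one_pos.trans hα).ne'], fun r hr => ?_,
    ((LinearMap.mul ℝ ℝ 4).concaveOn (convex_Ici 0)).add hconcave.concaveOn, ?_⟩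
  · have hlt : r ^ (α - 1) < 4 :=
      calc r ^ (α - 1) ≤ 4 ^ (α - 1) := Real.rpow_le_rpow hr.1.le hr.2 (by linarith)
        _ < 4 ^ (1 : ℝ) := Real.rpow_lt_rpow_of_exponent_lt (by norm_num) (by linarith)
        _ = 4 := Real.rpow_one 4
    rw [Real.rpow_sub_one hr.1.ne', div_lt_iff₀ hr.1] at hlt
    linarith
  · obtain ⟨c, hc, hgap⟩ := exists_second_difference_gap hconcave hrpow
    refine ⟨c, hc, fun r hr τ hτ => ?_⟩
    have hscaled := mul_le_mul_of_nonneg_left (hgap τ hτ) (Real.rpow_nonneg hr.1.le α)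
    linarith [rpow_second_difference α hr.1.le hτ]

end Profile

/-! ### The gain of the mirror coupling -/

section Gain

variable {E : Type*} [NormedAddCommGroup E] [InnerProductSpace ℝ E] {φ : ℝ → ℝ} {α r : ℝ} {e z : E}

/-- The increment of `φ ‖x - y‖` when `x` moves by a small `z` and `y` by the reflection of `z`,
where `r = ‖x - y‖` and `e` is the direction of `x - y`. -/
noncomputable def gain (φ : ℝ → ℝ) (r : ℝ) (e z : E) : ℝ :=
  if ‖z‖ < r / 4 then φ (r + 2 * inner ℝ e z) - φ r else 0

lemma abs_inner_le_norm_of_norm_eq_one (he : ‖e‖ = 1) (z : E) : |inner ℝ e z| ≤ ‖z‖ := by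
  simpa [he] using abs_real_inner_le_norm e z

lemma gain_add_gain_neg (hz : ‖z‖ < r / 4) : gain φ r e z + gain φ r e (-z) =
    φ (r + 2 * inner ℝ e z) + φ (r - 2 * inner ℝ e z) - 2 * φ r := by
  rw [gain, gain, norm_neg, if_pos hz, if_pos hz, inner_neg_right, mul_neg, ← sub_eq_add_neg]
  ring

lemma gain_add_gain_neg_nonpos (hφ : ConcaveOn ℝ (Ici 0) φ) (he : ‖e‖ = 1) (z : E) :
    gain φ r e z + gain φ r e (-z) ≤ 0 := by
  by_cases hz : ‖z‖ < r / 4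
  · rw [gain_add_gain_neg hz]
    have hinner := abs_le.1 (abs_inner_le_norm_of_norm_eq_one he z)
    linarith [map_add_add_map_sub_le_of_concaveOn hφ (m := r) (h := 2 * inner ℝ e z)
      (mem_Ici.2 (by linarith [hinner.1])) (mem_Ici.2 (by linarith [hinner.2]))]
  · simp [gain, hz]

lemma norm_and_inner_bounds_of_mem_ball (hr : 0 < r) (he : ‖e‖ = 1)
    (hz : z ∈ ball ((r / 8) • e) (r / 16)) :
    ‖z‖ < r / 4 ∧ r / 16 < inner ℝ e z ∧ inner ℝ e z < 3 * r / 16 := by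
  have hdist : ‖z - (r / 8) • e‖ < r / 16 := mem_ball_iff_norm.1 hz
  have hnorm : ‖(r / 8) • e‖ = r / 8 := by
    rw [norm_smul, he, mul_one, Real.norm_of_nonneg (by positivity)]
  have hinner := abs_le.1 (abs_inner_le_norm_of_norm_eq_one he (z - (r / 8) • e))
  rw [inner_sub_right, inner_smul_right, real_inner_self_eq_norm_sq, he] at hinner
  exact ⟨by linarith [norm_le_norm_add_norm_sub' z ((r / 8) • e)], by linarith, by linarith⟩

lemma gain_add_gain_neg_le {c : ℝ}
    (hgap : ∀ τ ∈ Icc (1 / 8 : ℝ) (3 / 8), φ (r + r * τ) + φ (r - r * τ) + c ≤ 2 * φ r)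
    (hr : 0 < r) (he : ‖e‖ = 1) (hz : z ∈ ball ((r / 8) • e) (r / 16)) :
    gain φ r e z + gain φ r e (-z) ≤ -c := by
  obtain ⟨hnorm, hlower, hupper⟩ := norm_and_inner_bounds_of_mem_ball hr he hz
  have hτ := hgap (2 * inner ℝ e z / r)
    ⟨by rw [le_div_iff₀ hr]; linarith, by rw [div_le_iff₀ hr]; linarith⟩
  rw [mul_div_cancel₀ _ hr.ne'] at hτ
  rw [gain_add_gain_neg hnorm]
  linarith

lemma exists_abs_gain_le (hφ : Continuous φ) (he : ‖e‖ = 1) :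
    ∃ M : ℝ, ∀ z, |gain φ r e z| ≤ M := by
  obtain ⟨M, hM⟩ := (isCompact_Icc (a := r - r / 2) (b := r + r / 2)).exists_bound_of_continuousOn
    (f := fun t => φ t - φ r) (by fun_prop)
  refine ⟨max M 0, fun z => ?_⟩
  unfold gain
  split_ifs with hz
  · have hinner := abs_le.1 (abs_inner_le_norm_of_norm_eq_one he z)
    exact (hM _ ⟨by linarith [hinner.1], by linarith [hinner.2]⟩).trans (le_max_left _ _)
  · simp

variable [FiniteDimensional ℝ E] [MeasurableSpace E] [BorelSpace E] {q : ℝ}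

lemma integrable_gain_mul_truncKernel (hq : finrank ℝ E < q) (hφ : Continuous φ) (r : ℝ)
    (he : ‖e‖ = 1) {ε : ℝ} (hε : 0 < ε) :
    Integrable fun z => gain φ r e z * truncKernel q ε z := by
  obtain ⟨M, hM⟩ := exists_abs_gain_le (r := r) hφ he
  have hmeas : Measurable (gain φ r e) :=
    Measurable.ite (measurableSet_lt measurable_norm measurable_const)
      (by fun_prop : Continuous fun z : E => φ (r + 2 * inner ℝ e z) - φ r).measurable
      measurable_const
  exact integrable_mul_truncKernel_of_bounded hq hε hmeas hM

lemma integral_gain_mul_truncKernel_le (hq : finrank ℝ E < q) (hφ : Continuous φ)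
    (hconcave : ConcaveOn ℝ (Ici 0) φ) {c : ℝ} (hc : 0 ≤ c)
    (hgap : ∀ τ ∈ Icc (1 / 8 : ℝ) (3 / 8), φ (r + r * τ) + φ (r - r * τ) + c ≤ 2 * φ r)
    (hr : 0 < r) (he : ‖e‖ = 1) {ε : ℝ} (hε : 0 < ε) (hεr : ε < r / 16) :
    2 * ∫ z, gain φ r e z * truncKernel q ε z ≤
      -(c * (r / 4) ^ (-q) * volume.real (ball ((r / 8) • e) (r / 16))) := by
  have hq0 : 0 ≤ q := (Nat.cast_nonneg _).trans hq.le
  set B := ball ((r / 8) • e) (r / 16)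
  have hB : Integrable (B.indicator fun _ => -(c * (r / 4) ^ (-q))) :=
    (integrable_indicator_iff measurableSet_ball).2 (integrableOn_const measure_ball_lt_top.ne)
  refine (two_mul_integral_mul_truncKernel_le
    (integrable_gain_mul_truncKernel hq hφ r he hε) hB fun z => ?_).trans_eq ?_
  · refine le_indicator_apply (fun hz => ?_) fun _ => ?_
    · obtain ⟨hnorm, hlower, -⟩ := norm_and_inner_bounds_of_mem_ball hr he hz
      have hεz : ε < ‖z‖ := by
        linarith [(le_abs_self _).trans (abs_inner_le_norm_of_norm_eq_one he z)]
      have hker : (r / 4) ^ (-q) ≤ truncKernel q ε z := by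
        rw [truncKernel_of_lt hεz]
        exact Real.rpow_le_rpow_of_nonpos (hε.trans hεz) hnorm.le (neg_nonpos.2 hq0)
      linarith [mul_le_mul_of_nonneg_left hker hc, mul_le_mul_of_nonneg_right
        (gain_add_gain_neg_le hgap hr he hz) (truncKernel_nonneg (q := q) ε z)]
    · exact mul_nonpos_of_nonpos_of_nonneg (gain_add_gain_neg_nonpos hconcave he z)
        (truncKernel_nonneg ε z)
  · rw [integral_indicator measurableSet_ball, setIntegral_const, smul_eq_mul]
    ring

lemma exists_integral_gain_le (hα : 0 < α) (hq : q = finrank ℝ E + α)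
    (hφ : IsCouplingProfile α φ) :
    ∃ c : ℝ, 0 < c ∧ ∀ (r : ℝ) (e : E) (ε : ℝ), 0 < r → r < 1 / 2 → ‖e‖ = 1 → 0 < ε →
      ε < r / 16 → ∫ z, gain φ r e z * truncKernel q ε z ≤ -c := by
  obtain ⟨c, hc, hgap⟩ := hφ.exists_second_difference_le
  have hV : 0 < volume.real (ball (0 : E) 1) :=
    ENNReal.toReal_pos (measure_ball_pos _ _ one_pos).ne' measure_ball_lt_top.ne
  refine ⟨c * 4 ^ q * (16 ^ finrank ℝ E)⁻¹ * volume.real (ball (0 : E) 1) / 2, by positivity,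
    fun r e ε hr hr' he hε hεr => ?_⟩
  have hle := integral_gain_mul_truncKernel_le (q := q) (by linarith) hφ.continuous hφ.concaveOn
    (by positivity) (hgap r ⟨hr, hr'⟩) hr he hε hεr
  have hscale : r ^ finrank ℝ E * (r ^ α * r ^ (-q)) = 1 := by
    rw [← Real.rpow_natCast, ← Real.rpow_add hr, ← Real.rpow_add hr, hq]
    simp
  have hvol : volume.real (ball ((r / 8) • e) (r / 16)) =
      r ^ finrank ℝ E * (16 ^ finrank ℝ E)⁻¹ * volume.real (ball (0 : E) 1) := by
    rw [Measure.real, Measure.addHaar_ball_of_pos _ _ (by positivity), ENNReal.toReal_mul,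
      ENNReal.toReal_ofReal (by positivity), div_pow, div_eq_mul_inv, Measure.real]
  rw [hvol, Real.div_rpow hr.le four_pos.le, Real.rpow_neg four_pos.le, div_inv_eq_mul] at hle
  linear_combination (1 / 2) * hle -
    (c * 4 ^ q * (16 ^ finrank ℝ E)⁻¹ * volume.real (ball (0 : E) 1) / 2) * hscale

end Gain

/-! ### Mirror coupling -/

section Mirror

variable {E : Type*} [NormedAddCommGroup E] [InnerProductSpace ℝ E] {e z : E} {ρ : ℝ}

/-- The map that reflects the ball of radius `ρ` in the hyperplane orthogonal to `e` and fixes all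
other points. -/
noncomputable def mirror (e : E) (ρ : ℝ) (z : E) : E :=
  if ‖z‖ < ρ then (Submodule.span ℝ {e})ᗮ.reflection z else z

lemma norm_mirror (e : E) (ρ : ℝ) (z : E) : ‖mirror e ρ z‖ = ‖z‖ := by
  unfold mirror
  split_ifs
  exacts [LinearIsometryEquiv.norm_map _ z, rfl]

lemma mirror_of_lt (he : ‖e‖ = 1) (hz : ‖z‖ < ρ) :
    mirror e ρ z = z - (2 * inner ℝ e z) • e := by
  rw [mirror, if_pos hz, Submodule.reflection_orthogonal_apply,
    Submodule.reflection_singleton_apply]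
  simp only [he, RCLike.ofReal_real_eq_id, id, one_pow, div_one]
  module

lemma mirror_of_le (hz : ρ ≤ ‖z‖) : mirror e ρ z = z := if_neg hz.not_gt

lemma apply_norm_add_sub_mirror {φ : ℝ → ℝ} {x y : E} {r : ℝ} (he : ‖e‖ = 1) (hr : 0 < r)
    (hxy : x - y = r • e) (z : E) :
    φ ‖x + z - (y + mirror e (r / 4) z)‖ = φ r + gain φ r e z := by
  have hdiff (w : E) : x + z - (y + w) = r • e + (z - w) := by rw [← hxy]; abel
  have hnorm {t : ℝ} (ht : 0 ≤ t) : ‖t • e‖ = t := by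
    rw [norm_smul, he, mul_one, Real.norm_of_nonneg ht]
  rw [hdiff]
  rcases lt_or_ge ‖z‖ (r / 4) with hz | hz
  · have hinner := abs_le.1 (abs_inner_le_norm_of_norm_eq_one he z)
    rw [mirror_of_lt he hz, sub_sub_cancel, ← add_smul, hnorm (by linarith [hinner.1]), gain,
      if_pos hz, add_sub_cancel]
  · rw [mirror_of_le hz, sub_self, add_zero, hnorm hr.le, gain, if_neg hz.not_gt, add_zero]

variable [FiniteDimensional ℝ E] [MeasurableSpace E] [BorelSpace E]

lemma measurePreserving_mirror (e : E) (ρ : ℝ) : MeasurePreserving (mirror e ρ) := by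
  set σ := (Submodule.span ℝ {e})ᗮ.reflection
  have hball : MeasurableSet {z : E | ‖z‖ < ρ} := measurableSet_lt measurable_norm measurable_const
  have hmeas : Measurable (mirror e ρ) :=
    Measurable.ite hball σ.continuous.measurable measurable_id
  refine ⟨hmeas, Measure.ext fun s hs => ?_⟩
  have hpre : mirror e ρ ⁻¹' s = σ ⁻¹' (s ∩ {z | ‖z‖ < ρ}) ∪ s \ {z | ‖z‖ < ρ} := by
    ext z
    by_cases hz : ‖z‖ < ρ <;> simp [mirror, σ, hz]
  have hdisj : Disjoint (σ ⁻¹' (s ∩ {z | ‖z‖ < ρ})) (s \ {z | ‖z‖ < ρ}) :=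
    Set.disjoint_left.2 fun z hz hz' => hz'.2 (by simpa using hz.2)
  rw [Measure.map_apply hmeas hs, hpre, measure_union hdisj (hs.diff hball),
    σ.measurePreserving.measure_preimage (hs.inter hball).nullMeasurableSet,
    measure_inter_add_sdiff s hball]

lemma integral_comp_mirror {f : E → ℝ} (hf : Integrable f) (e : E) (ρ : ℝ) :
    ∫ z, f (mirror e ρ z) = ∫ z, f z := by
  have hmp := measurePreserving_mirror e ρ
  conv_rhs => rw [← hmp.map_eq]
  exact (integral_map hmp.aemeasurable (by rw [hmp.map_eq]; exact hf.aestronglyMeasurable)).symm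

end Mirror

/-! ### Doubling of variables -/

section Doubling

variable {E : Type*} [NormedAddCommGroup E] {φ : ℝ → ℝ} {A M r q : ℝ} {u : E → ℝ} {x y e z : E}

/-- The penalized difference of `u` in doubled variables; a modulus of continuity `A * φ` at the
origin is its nonpositivity at `x = 0`. -/
def doubled (φ : ℝ → ℝ) (A M : ℝ) (u : E → ℝ) (x y : E) : ℝ :=
  u x - u y - A * φ ‖x - y‖ - 2 * M * ‖x‖ ^ 2

/-- A maximizing pair of the doubled functional that is off the diagonal and away from the boundary
of the domain of the maximization. -/
structure IsDoublingPair (φ : ℝ → ℝ) (A M : ℝ) (u : E → ℝ) (x y : E) : Prop where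
  norm_left_lt : ‖x‖ < 1
  norm_right_lt : ‖y‖ < 3 / 2
  norm_sub_mem : ‖x - y‖ ∈ Ioo 0 (1 / 2)
  doubled_le : ∀ x' y', ‖x'‖ ≤ 2 → ‖y'‖ ≤ 2 → doubled φ A M u x' y' ≤ doubled φ A M u x y

lemma bounds_of_doubled_pos (hzero : φ 0 = 0) (hφ : ∀ r ∈ Ioc 0 4, 0 < φ r) (hA : 0 ≤ A)
    (hAM : ∀ r ∈ Icc (1 / 2) 4, 2 * M ≤ A * φ r) (hu : ∀ x, ‖x‖ ≤ 2 → |u x| ≤ M)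
    (hx : ‖x‖ ≤ 2) (hy : ‖y‖ ≤ 2) (hpos : 0 < doubled φ A M u x y) :
    ‖x‖ < 1 ∧ ‖x - y‖ ∈ Ioo 0 (1 / 2) := by
  unfold doubled at hpos
  have hM : 0 ≤ M := (abs_nonneg _).trans (hu x hx)
  have hux := abs_le.1 (hu x hx)
  have huy := abs_le.1 (hu y hy)
  have hr4 : ‖x - y‖ ≤ 4 := (norm_sub_le x y).trans (by linarith)
  have hquad : 0 ≤ 2 * M * ‖x‖ ^ 2 := by positivity
  have hr0 : 0 < ‖x - y‖ := by
    refine norm_pos_iff.2 (sub_ne_zero.2 fun h => ?_)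
    rw [h] at hpos hquad
    simp only [sub_self, norm_zero, hzero, mul_zero] at hpos
    linarith
  have hAφ : 0 ≤ A * φ ‖x - y‖ := mul_nonneg hA (hφ _ ⟨hr0, hr4⟩).le
  refine ⟨?_, hr0, ?_⟩
  · by_contra! hx1
    nlinarith [one_le_pow₀ (n := 2) hx1]
  · by_contra! hr
    linarith [hAM _ ⟨hr, hr4⟩]

lemma exists_isDoublingPair [ProperSpace E] (hcont : Continuous φ) (hzero : φ 0 = 0)
    (hφ : ∀ r ∈ Ioc 0 4, 0 < φ r) (hucont : Continuous u) (hA : 0 ≤ A)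
    (hAM : ∀ r ∈ Icc (1 / 2) 4, 2 * M ≤ A * φ r) (hu : ∀ x, ‖x‖ ≤ 2 → |u x| ≤ M)
    (hy : ‖y‖ ≤ 2) (hlt : A * φ ‖y‖ < u 0 - u y) : ∃ x₀ y₀, IsDoublingPair φ A M u x₀ y₀ := by
  have hdoubled : Continuous fun p : E × E => doubled φ A M u p.1 p.2 := by
    unfold doubled
    fun_prop
  obtain ⟨⟨x₀, y₀⟩, hmem, hmax⟩ :=
    ((isCompact_closedBall (0 : E) 2).prod (isCompact_closedBall (0 : E) 2)).exists_isMaxOn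
      ⟨(0, 0), by simp⟩ hdoubled.continuousOn
  simp only [mem_prod, mem_closedBall_zero_iff] at hmem
  have hle (x' y' : E) (hx' : ‖x'‖ ≤ 2) (hy' : ‖y'‖ ≤ 2) :
      doubled φ A M u x' y' ≤ doubled φ A M u x₀ y₀ :=
    hmax (mk_mem_prod (mem_closedBall_zero_iff.2 hx') (mem_closedBall_zero_iff.2 hy'))
  have hpos : 0 < doubled φ A M u 0 y := by
    simpa [doubled] using hlt
  obtain ⟨hx₀, hr⟩ := bounds_of_doubled_pos hzero hφ hA hAM hu hmem.1 hmem.2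
    (hpos.trans_le (hle 0 y (by simp) hy))
  exact ⟨x₀, y₀, hx₀, by linarith [norm_le_norm_add_norm_sub x₀ y₀, hr.2], hr, hle⟩

variable [InnerProductSpace ℝ E]

lemma norm_eq_of_sub_eq_smul (he : ‖e‖ = 1) (hr : 0 < r) (hxy : x - y = r • e) : ‖x - y‖ = r := by
  rw [hxy, norm_smul, he, mul_one, Real.norm_of_nonneg hr.le]

lemma coupled_increment_le (hpair : IsDoublingPair φ A M u x y) (he : ‖e‖ = 1) (hr : 0 < r)
    (hxy : x - y = r • e) (hz : ‖z‖ < 1 / 2) :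
    u y - u (y + mirror e (r / 4) z) - (u x - u (x + z)) ≤
      A * gain φ r e z + 2 * M * barrier ((2 : ℝ) • x) z := by
  have hyz := norm_add_le y (mirror e (r / 4) z)
  rw [norm_mirror] at hyz
  have hle := hpair.doubled_le (x + z) (y + mirror e (r / 4) z)
    (by linarith [norm_add_le x z, hpair.norm_left_lt]) (by linarith [hpair.norm_right_lt])
  rw [doubled, doubled, apply_norm_add_sub_mirror (φ := φ) he hr hxy,
    norm_eq_of_sub_eq_smul he hr hxy, norm_add_sq_real] at hle
  rw [barrier, if_pos hz, real_inner_smul_left]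
  linarith

lemma coupled_increment_mul_truncKernel_le (hq : 0 ≤ q) (hpair : IsDoublingPair φ A M u x y)
    (he : ‖e‖ = 1) (hr : 0 < r) (hxy : x - y = r • e) (hu : ∀ x, ‖x‖ ≤ 2 → |u x| ≤ M)
    (ε : ℝ) (z : E) :
    (u y - u (y + mirror e (r / 4) z)) * truncKernel q ε z -
        (u x - u (x + z)) * truncKernel q ε z ≤
      A * (gain φ r e z * truncKernel q ε z) +
          2 * M * (barrier ((2 : ℝ) • x) z * truncKernel q ε z) +
        7 ^ q * (|u (x + z)| * weight q (x + z) + |u (y + z)| * weight q (y + z)) := by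
  have hk := truncKernel_nonneg (q := q) ε z
  rcases lt_or_ge ‖z‖ (1 / 2) with hz | hz
  · have htail : 0 ≤ 7 ^ q * (|u (x + z)| * weight q (x + z) + |u (y + z)| * weight q (y + z)) := by
      have := weight_pos (q := q) (x + z)
      have := weight_pos (q := q) (y + z)
      positivity
    linarith [mul_le_mul_of_nonneg_right (coupled_increment_le hpair he hr hxy hz) hk]
  · have hx := hpair.norm_left_lt
    have hy := hpair.norm_right_lt
    have hr' := hpair.norm_sub_mem.2
    rw [norm_eq_of_sub_eq_smul he hr hxy] at hr'
    rw [mirror_of_le (by linarith), gain, if_neg (by linarith), barrier, if_neg hz.not_gt]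
    have hkernel {w : E} (hw : ‖w‖ ≤ 3 / 2) :
        |u (w + z)| * truncKernel q ε z ≤ |u (w + z)| * (7 ^ q * weight q (w + z)) :=
      mul_le_mul_of_nonneg_left (truncKernel_le_mul_weight hq (by norm_num) fun _ => by
        linarith [norm_add_le w z]) (abs_nonneg _)
    have hincr : u y - u (y + z) - (u x - u (x + z)) ≤ 2 * M + |u (x + z)| + |u (y + z)| := by
      linarith [(abs_le.1 (hu x (by linarith))).1, (abs_le.1 (hu y (by linarith))).2,
        le_abs_self (u (x + z)), neg_abs_le (u (y + z))]
    linarith [mul_le_mul_of_nonneg_right hincr hk, hkernel (w := x) (by linarith), hkernel hy.le]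

variable [FiniteDimensional ℝ E] [MeasurableSpace E] [BorelSpace E]

lemma truncFracLap_sub_truncFracLap_le (hq : finrank ℝ E < q) (hφ : Continuous φ)
    (hharm : IsFracHarmonic q u) (hu : ∀ x, ‖x‖ ≤ 2 → |u x| ≤ M)
    (hpair : IsDoublingPair φ A M u x y) (he : ‖e‖ = 1) (hr : 0 < r) (hxy : x - y = r • e)
    {ε : ℝ} (hε : 0 < ε) :
    truncFracLap q ε u y - truncFracLap q ε u x ≤
      A * (∫ z, gain φ r e z * truncKernel q ε z) +
          2 * M * (∫ z, barrier ((2 : ℝ) • x) z * truncKernel q ε z) +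
        7 ^ q * (tailNorm q u + tailNorm q u) := by
  have hincr := hharm.integrable_increment hq hε
  have hcoupled : Integrable fun z =>
      (u y - u (y + mirror e (r / 4) z)) * truncKernel q ε z := by
    simpa only [Function.comp_def, truncKernel_congr_norm (norm_mirror _ _ _)] using
      (measurePreserving_mirror e (r / 4)).integrable_comp_of_integrable (hincr y)
  have hmirror : truncFracLap q ε u y =
      ∫ z, (u y - u (y + mirror e (r / 4) z)) * truncKernel q ε z := by
    simpa only [truncFracLap, truncKernel_congr_norm (norm_mirror _ _ _)] using
      (integral_comp_mirror (hincr y) e (r / 4)).symm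
  have htail := integrable_abs_mul_weight hharm.integrable
  have htrans (w : E) : tailNorm q u = ∫ z, |u (w + z)| * weight q (w + z) :=
    (integral_add_left_eq_self (fun z => |u z| * weight q z) w).symm
  have hgain := (integrable_gain_mul_truncKernel hq hφ r he hε).const_mul A
  have hbarrier := (integrable_barrier_mul_truncKernel hq ((2 : ℝ) • x) hε).const_mul (2 * M)
  have hshift := ((htail.comp_add_left x).add (htail.comp_add_left y)).const_mul (7 ^ q)
  rw [hmirror, truncFracLap, ← integral_sub hcoupled (hincr x)]
  refine (integral_mono (hcoupled.sub (hincr x)) ((hgain.add hbarrier).add hshift) fun z =>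
    coupled_increment_mul_truncKernel_le ((Nat.cast_nonneg _).trans hq.le) hpair he hr hxy hu
      ε z).trans_eq ?_
  nth_rw 1 [htrans x]
  rw [htrans y, ← integral_add (htail.comp_add_left x) (htail.comp_add_left y),
    ← integral_const_mul, ← integral_const_mul, ← integral_const_mul,
    ← integral_add hgain hbarrier]
  exact integral_add (hgain.add hbarrier) hshift

lemma IsDoublingPair.le_integral_add (hq : finrank ℝ E < q) (hφ : Continuous φ)
    (hharm : IsFracHarmonic q u) (hu : ∀ x, ‖x‖ ≤ 2 → |u x| ≤ M)
    (hpair : IsDoublingPair φ A M u x y) {c C : ℝ} (hA : 0 ≤ A)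
    (hgain : ∀ (r : ℝ) (e : E) (ε : ℝ), 0 < r → r < 1 / 2 → ‖e‖ = 1 → 0 < ε → ε < r / 16 →
      ∫ z, gain φ r e z * truncKernel q ε z ≤ -c)
    (hbarrier : ∀ (a : E) (ε : ℝ), 0 < ε → ∫ z, barrier a z * truncKernel q ε z ≤ C) :
    A * c ≤ 2 * M * C + 7 ^ q * (tailNorm q u + tailNorm q u) := by
  obtain ⟨hr, hr'⟩ := hpair.norm_sub_mem
  have hM : 0 ≤ M := (abs_nonneg _).trans (hu 0 (by simp))
  have hlim := (hharm.tendsto_truncFracLap y).sub (hharm.tendsto_truncFracLap x)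
  rw [sub_zero] at hlim
  have hsmall : ∀ᶠ ε in 𝓝[>] (0 : ℝ), ε < ‖x - y‖ / 16 :=
    mem_nhdsWithin_of_mem_nhds (Iio_mem_nhds (by positivity))
  have hle : 0 ≤ A * -c + 2 * M * C + 7 ^ q * (tailNorm q u + tailNorm q u) := by
    refine le_of_tendsto hlim ?_
    filter_upwards [self_mem_nhdsWithin, hsmall] with ε hε hεr
    have he : ‖‖x - y‖⁻¹ • (x - y)‖ = 1 := by
      rw [norm_smul, norm_inv, norm_norm, inv_mul_cancel₀ hr.ne']
    refine (truncFracLap_sub_truncFracLap_le hq hφ hharm hu hpair he hr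
      (smul_inv_smul₀ hr.ne' _).symm hε).trans ?_
    gcongr
    · exact hgain _ _ ε hr hr' he hε hεr
    · exact hbarrier _ ε hε
  linarith

variable [Nontrivial E] {α : ℝ}

lemma exists_sub_le_mul_profile (hα : 0 < α) (hα' : α < 2) (hq : q = finrank ℝ E + α)
    (hφ : IsCouplingProfile α φ) : ∃ K : ℝ, 0 < K ∧ ∀ {u : E → ℝ}, IsFracHarmonic q u →
      ∀ {M : ℝ}, 0 < M → (∀ x, ‖x‖ ≤ 2 → |u x| ≤ M) → tailNorm q u ≤ M →
        ∀ {y : E}, ‖y‖ ≤ 2 → u 0 - u y ≤ K * M * φ ‖y‖ := by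
  have hn : finrank ℝ E < q := by linarith
  obtain ⟨c₀, hc₀, hφc₀⟩ := isCompact_Icc.exists_forall_le' hφ.continuous.continuousOn
    fun r (hr : r ∈ Icc (1 / 2) 4) => hφ.pos_of_mem r ⟨by linarith [hr.1], hr.2⟩
  obtain ⟨c, hc, hgain⟩ := exists_integral_gain_le hα hq hφ
  obtain ⟨C, hC, hbarrier⟩ := exists_integral_barrier_le (E := E) (q := q) hn (by linarith)
  set N := 2 * C + 2 * 7 ^ q + 1
  refine ⟨2 / c₀ + N / c, by positivity, fun {u} hu M hM hbound htail y hy => ?_⟩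
  by_contra! hlt
  have hAM : ∀ r ∈ Icc (1 / 2) 4, 2 * M ≤ (2 / c₀ + N / c) * M * φ r := fun r hr =>
    calc 2 * M = 2 / c₀ * M * c₀ := by field_simp
      _ ≤ (2 / c₀ + N / c) * M * φ r := by
        gcongr
        · exact le_add_of_nonneg_right (by positivity)
        · exact hφc₀ r hr
  obtain ⟨x₀, y₀, hpair⟩ := exists_isDoublingPair hφ.continuous hφ.map_zero hφ.pos_of_mem
    hu.continuous (by positivity) hAM hbound hy hlt
  have hle := hpair.le_integral_add hn hφ.continuous hu hbound (by positivity) hgain hbarrier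
  have hNM : N * M ≤ (2 / c₀ + N / c) * M * c :=
    calc N * M = N / c * M * c := by field_simp
      _ ≤ (2 / c₀ + N / c) * M * c := by
        gcongr
        exact le_add_of_nonneg_left (by positivity)
  have := mul_le_mul_of_nonneg_left htail (by positivity : (0 : ℝ) ≤ 7 ^ q)
  linarith

end Doubling

/-! ### Hölder estimate -/

section Holder

variable {E : Type*} [NormedAddCommGroup E] [InnerProductSpace ℝ E] [FiniteDimensional ℝ E]
  [MeasurableSpace E] [BorelSpace E] [Nontrivial E] {α q : ℝ}

lemma exists_abs_sub_le_mul_tailNorm (hα : 0 < α) (hα' : α < 2) (hq : q = finrank ℝ E + α)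
    {φ : ℝ → ℝ} (hφ : IsCouplingProfile α φ) :
    ∃ H : ℝ, 0 < H ∧ ∀ {u : E → ℝ}, IsFracHarmonic q u → ∀ {T : ℝ}, 0 < T → tailNorm q u ≤ T →
      ∀ {y : E}, ‖y‖ ≤ 2 → |u 0 - u y| ≤ H * T * φ ‖y‖ := by
  obtain ⟨D, hD, hbound⟩ := exists_abs_le_mul_tailNorm (E := E) (q := q) (by linarith)
    (by linarith)
  obtain ⟨K, hK, hsub⟩ := exists_sub_le_mul_profile (E := E) hα hα' hq hφ
  have honesided {u : E → ℝ} (hu : IsFracHarmonic q u) {T : ℝ} (hT : 0 < T)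
      (htail : tailNorm q u ≤ T) {y : E} (hy : ‖y‖ ≤ 2) :
      u 0 - u y ≤ K * (D + 1) * T * φ ‖y‖ := by
    have hDT : D * tailNorm q u ≤ D * T := by gcongr
    rw [mul_assoc K]
    exact hsub hu (by positivity) (fun x hx => (hbound hu hx).trans (by linarith))
      (htail.trans (by linarith [mul_pos hD hT])) hy
  refine ⟨K * (D + 1), by positivity, fun {u} hu {T} hT htail y hy => abs_le'.2
    ⟨honesided hu hT htail hy, ?_⟩⟩
  simpa only [neg_sub_neg, neg_sub] using honesided hu.neg hT ((tailNorm_neg q u).trans_le htail) hy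

theorem exists_holder_estimate (hα : 0 < α) (hα' : α < 2) (hq : q = finrank ℝ E + α) {γ : ℝ}
    (hγ : γ ≤ 1) (hγα : γ < α) :
    ∃ p H : ℝ, γ ≤ p ∧ 0 < p ∧ p < α ∧ 0 < H ∧ ∀ {u : E → ℝ}, IsFracHarmonic q u →
      ∀ {T : ℝ}, 0 < T → tailNorm q u ≤ T → ∀ {y : E}, ‖y‖ ≤ 2 →
        |u 0 - u y| ≤ H * T * ‖y‖ ^ p := by
  rcases lt_or_ge 1 α with hα1 | hα1
  · obtain ⟨H, hH, hest⟩ := exists_abs_sub_le_mul_tailNorm (E := E) hα hα' hq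
      (isCouplingProfile_linear_sub_rpow hα1 hα')
    refine ⟨1, H * 4, hγ, one_pos, hα1, by positivity, fun {u} hu {T} hT htail {y} hy =>
      (hest hu hT htail hy).trans ?_⟩
    rw [Real.rpow_one]
    have : 0 ≤ H * T * ‖y‖ ^ α := by positivity
    linarith
  · obtain ⟨p, hp, hpα⟩ := exists_between (max_lt hγα hα)
    obtain ⟨hγp, hp0⟩ := max_lt_iff.1 hp
    obtain ⟨H, hH, hest⟩ := exists_abs_sub_le_mul_tailNorm (E := E) hα hα' hq
      (isCouplingProfile_rpow hp0 (hpα.trans_le hα1) hpα.le)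
    exact ⟨p, H, hγp.le, hp0, hpα, hH, hest⟩

end Holder

/-! ### Liouville theorem -/

section Liouville

variable {E : Type*} [NormedAddCommGroup E] {u : E → ℝ}

lemma exists_neg_mul_rpow_sub_le [ProperSpace E] (hcont : Continuous u) {γ p ε : ℝ}
    (hγp : γ ≤ p) (hε : 0 ≤ ε) (hgrow : ∀ᶠ x in cocompact E, -ε ≤ u x / ‖x‖ ^ γ) :
    ∃ B : ℝ, ∀ x, -(ε * ‖x‖ ^ p) - B ≤ u x := by
  obtain ⟨t, ht, hts⟩ := mem_cocompact.1 hgrow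
  obtain ⟨B, hB⟩ := (ht.union (isCompact_closedBall (0 : E) 1)).exists_bound_of_continuousOn
    hcont.continuousOn
  refine ⟨max B 0, fun x => ?_⟩
  by_cases hx : x ∈ t ∪ closedBall 0 1
  · have hux := (abs_le.1 (hB x hx)).1
    have : 0 ≤ ε * ‖x‖ ^ p := by positivity
    linarith [le_max_left B 0]
  · obtain ⟨hxt, hx1⟩ : x ∉ t ∧ 1 < ‖x‖ := by simpa using hx
    have hux : -ε ≤ u x / ‖x‖ ^ γ := hts hxt
    rw [le_div_iff₀ (by positivity)] at hux
    have hrpow := Real.rpow_le_rpow_of_exponent_le hx1.le hγp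
    linarith [mul_le_mul_of_nonneg_left hrpow hε, le_max_right B 0]

variable [InnerProductSpace ℝ E] [FiniteDimensional ℝ E] [MeasurableSpace E] [BorelSpace E]
  {q : ℝ}

lemma tailNorm_le_add_const (hq : finrank ℝ E < q)
    (hu : Integrable fun y => u y * weight q y) {c : ℝ} (hc : 0 ≤ c) :
    tailNorm q u ≤ (∫ y, (u y + c)⁺ * weight q y) + (∫ y, (u y + c)⁻ * weight q y) +
      c * ∫ y : E, weight q y := by
  have hadd : Integrable fun y => (u y + c) * weight q y := by
    simpa only [add_mul] using! hu.add ((integrable_weight hq).const_mul c)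
  have hpos := integrable_posPart_mul_weight hadd
  have hneg := integrable_negPart_mul_weight hadd
  have hweight : Integrable fun y : E => c * weight q y := (integrable_weight hq).const_mul c
  rw [tailNorm, ← integral_const_mul, ← integral_add hpos hneg,
    ← integral_add (by exact hpos.add hneg) hweight]
  refine integral_mono (integrable_abs_mul_weight hu) ((hpos.add hneg).add hweight) fun y => ?_
  simp only [← add_mul, posPart_add_negPart]
  refine mul_le_mul_of_nonneg_right ?_ (weight_pos y).le
  simpa [abs_of_nonneg hc] using abs_sub (u y + c) c

lemma exists_tailNorm_le_mul [Nontrivial E] {p : ℝ} (hp : 0 ≤ p) (hq : finrank ℝ E < q - p)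
    (hq' : q < finrank ℝ E + 2) :
    ∃ C : ℝ, 0 < C ∧ ∀ {v : E → ℝ}, IsFracHarmonic q v → ∀ {κ : ℝ}, 0 ≤ κ → |v 0| ≤ κ →
      (∀ y, -(κ * ‖y‖ ^ p) - κ ≤ v y) → tailNorm q v ≤ C * κ := by
  have hn : finrank ℝ E < q := by linarith
  obtain ⟨C, hC, hharnack⟩ := weak_harnack (E := E) hn hq'
  have hI : 0 < ∫ y : E, weight q y := integral_weight_pos hn
  have hJ : 0 ≤ ∫ y : E, ‖y‖ ^ p * weight q y :=
    integral_nonneg fun y => mul_nonneg (by positivity) (weight_pos y).le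
  set I := ∫ y : E, weight q y
  set J := ∫ y : E, ‖y‖ ^ p * weight q y with hJdef
  refine ⟨C * (3 + J) + J + 2 * I, by positivity, fun {v} hv κ hκ hv0 hlow => ?_⟩
  have hv' : IsFracHarmonic q fun y => v y + 2 * κ := hv.add_const hn _
  have hpos (y : E) (hy : ‖y‖ ≤ 1) : 0 ≤ v y + 2 * κ := by
    linarith [hlow y, mul_le_of_le_one_right hκ (Real.rpow_le_one (norm_nonneg y) hy hp)]
  have hneg : ∫ y, (v y + 2 * κ)⁻ * weight q y ≤ κ * J := by
    rw [hJdef, ← integral_const_mul]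
    refine integral_mono (integrable_negPart_mul_weight hv'.integrable)
      ((integrable_norm_rpow_mul_weight hp hq).const_mul κ) fun y => ?_
    simp only [← mul_assoc]
    refine mul_le_mul_of_nonneg_right (sup_le ?_ (by positivity)) (weight_pos y).le
    linarith [hlow y]
  calc tailNorm q v
      ≤ C * (v 0 + 2 * κ + ∫ y, (v y + 2 * κ)⁻ * weight q y) +
          (∫ y, (v y + 2 * κ)⁻ * weight q y) + 2 * κ * I := by
        grw [tailNorm_le_add_const hn hv.integrable (c := 2 * κ) (by positivity), hharnack hv' hpos]
    _ ≤ C * (κ + 2 * κ + κ * J) + κ * J + 2 * κ * I := by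
        gcongr
        exact (le_abs_self _).trans hv0
    _ = (C * (3 + J) + J + 2 * I) * κ := by ring

theorem IsFracHarmonic.eq_of_growth [Nontrivial E] {α γ : ℝ} (hα : 0 < α) (hα' : α < 2)
    (hγ : γ ≤ 1) (hγα : γ < α) (hu : IsFracHarmonic (finrank ℝ E + α) u)
    (hgrow : ∀ ε : ℝ, 0 < ε → ∀ᶠ x in cocompact E, -ε ≤ u x / ‖x‖ ^ γ) (x : E) : u 0 = u x := by
  obtain ⟨p, H, hγp, hp, hpα, hH, hholder⟩ := exists_holder_estimate (E := E) hα hα' rfl hγ hγα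
  obtain ⟨C, hC, htail⟩ := exists_tailNorm_le_mul (E := E) (q := finrank ℝ E + α) hp.le
    (by linarith) (by linarith)
  have hdecay : ∀ ε > 0, |u 0 - u x| ≤ H * C * ‖x‖ ^ p * ε := fun ε hε => by
    obtain ⟨B, hB⟩ := exists_neg_mul_rpow_sub_le hu.continuous hγp hε.le (hgrow ε hε)
    obtain ⟨R, hR, hRx, hRu, hRB⟩ := ((eventually_gt_atTop 0).and ((eventually_ge_atTop ‖x‖).and
      (((tendsto_rpow_atTop hp).const_mul_atTop hε).eventually_ge_atTop |u 0| |>.and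
        (((tendsto_rpow_atTop hp).const_mul_atTop hε).eventually_ge_atTop B)))).exists
    have hv : IsFracHarmonic (finrank ℝ E + α) fun y => u (0 + R • y) :=
      hu.comp_add_smul (by positivity) 0 hR
    have hlow (y : E) : -(ε * R ^ p * ‖y‖ ^ p) - ε * R ^ p ≤ u (0 + R • y) := by
      have := hB (0 + R • y)
      rw [zero_add, norm_smul, Real.norm_of_nonneg hR.le, Real.mul_rpow hR.le (norm_nonneg y)]
        at this
      rw [zero_add]
      linarith
    have hvtail := htail hv (by positivity) (by simpa using hRu) hlow
    have hxR : ‖R⁻¹ • x‖ = ‖x‖ / R := by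
      rw [norm_smul, norm_inv, Real.norm_of_nonneg hR.le, inv_mul_eq_div]
    have hest := hholder hv (by positivity) hvtail (y := R⁻¹ • x)
      (by rw [hxR]; exact (div_le_one_of_le₀ hRx hR.le).trans one_le_two)
    rw [hxR, Real.div_rpow (norm_nonneg x) hR.le] at hest
    simp only [smul_zero, zero_add, smul_inv_smul₀ hR.ne'] at hest
    exact hest.trans_eq (by field_simp)
  have hlim : Tendsto (fun ε : ℝ => H * C * ‖x‖ ^ p * ε) (𝓝[>] 0) (𝓝 0) :=
    (Continuous.tendsto' (by fun_prop) 0 0 (mul_zero _)).mono_left nhdsWithin_le_nhds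
  have hle : |u 0 - u x| ≤ 0 := ge_of_tendsto hlim (eventually_mem_nhdsWithin.mono hdecay)
  exact sub_eq_zero.1 (abs_nonpos_iff.1 hle)

end Liouville

end FractionalLiouville

theorem fractional_liouville_general {E : Type*} [NormedAddCommGroup E] [InnerProductSpace ℝ E]
    [FiniteDimensional ℝ E] [MeasurableSpace E] [BorelSpace E] {s γ : ℝ} (hs : s ∈ Ioo (0 : ℝ) 1)
    (hγ : γ ≤ 1) (hγs : γ < 2 * s) {u : E → ℝ}
    (hint : Integrable fun y : E => |u y| / (1 + ‖y‖ ^ (finrank ℝ E + 2 * s)))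
    (hcont : Continuous u)
    (hharm : ∀ x : E, Tendsto (fun ε : ℝ => ∫ y in {y : E | ε < ‖y - x‖},
      (u x - u y) / ‖x - y‖ ^ (finrank ℝ E + 2 * s)) (𝓝[>] (0 : ℝ)) (𝓝 0))
    (hgrow : ∀ ε : ℝ, 0 < ε → ∀ᶠ x in cocompact E, -ε ≤ u x / ‖x‖ ^ γ) :
    ∃ c : ℝ, ∀ x, u x = c := by
  obtain ⟨hs0, hs1⟩ := hs
  rcases subsingleton_or_nontrivial E with _ | _
  · exact ⟨u 0, fun x => congrArg u (Subsingleton.elim x 0)⟩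
  have hu : FractionalLiouville.IsFracHarmonic (finrank ℝ E + 2 * s) u :=
    .of_tendsto_setIntegral (by positivity) hcont hint hharm
  exact ⟨u 0, fun x => (hu.eq_of_growth (by linarith) (by linarith) hγ hγs hgrow x).symm⟩

/-- Liouville theorem for the fractional Laplacian.  If
`u ∈ L¹_s(ℝⁿ)` is continuous, `s`-harmonic at every point of `ℝⁿ` and
satisfies `liminf_{|x|→∞} u(x)/|x|^γ ≥ 0` for some `γ ∈ [0,1]` with `γ < 2s`
(expressed below by: for every `ε > 0`, eventually along the cocompact filter
`u(x)/|x|^γ ≥ −ε`), then `u` is constant. -/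
theorem fractional_liouville
    (n : ℕ) (hn : 1 ≤ n) (s : ℝ) (hs : s ∈ Set.Ioo (0:ℝ) 1)
    (γ : ℝ) (hγ0 : 0 ≤ γ) (hγ1 : γ ≤ 1) (hγs : γ < 2 * s)
    (u : EuclideanSpace ℝ (Fin n) → ℝ)
    (hloc : MeasureTheory.LocallyIntegrable u)
    (hL1s : MeasureTheory.Integrable (fun y : EuclideanSpace ℝ (Fin n) =>
      |u y| / (1 + ‖y‖ ^ ((n : ℝ) + 2 * s))))
    (hcont : Continuous u)
    (hharm : ∀ x : EuclideanSpace ℝ (Fin n),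
      Filter.Tendsto
        (fun ε : ℝ => ∫ y in {y : EuclideanSpace ℝ (Fin n) | ε < ‖y - x‖},
          (u x - u y) / ‖x - y‖ ^ ((n : ℝ) + 2 * s))
        (𝓝[>] (0:ℝ)) (𝓝 0))
    (hgrow : ∀ ε : ℝ, 0 < ε →
      ∀ᶠ x in Filter.cocompact (EuclideanSpace ℝ (Fin n)), -ε ≤ u x / ‖x‖ ^ γ) :
    ∃ c : ℝ, ∀ x, u x = c := by
  exact fractional_liouville_general hs hγ1 hγs
    (by simpa only [finrank_euclideanSpace_fin] using hL1s) hcont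
    (by simpa only [finrank_euclideanSpace_fin] using hharm) hgrow
end

section
/- Let n ≥ 1, s ∈ (0,1), and α ∈ (2s, 1]. There exists a constant C > 0 depending only on n, s, α such that: for every bounded function u : ℝⁿ → ℝ with [u]_{C^{0,α}} < ∞, the integral v(x) := ∫_{ℝⁿ} (u(x) − u(y))/|x−y|^{n+2s} dy converges absolutely for every x ∈ ℝⁿ, and [v]_{C^{0,α−2s}} ≤ C [u]_{C^{0,α}}. (That is, if u ∈ C^{0,α}(ℝⁿ) with α > 2s, then (−Δ)^s u ∈ C^{0,α−2s}(ℝⁿ), with the corresponding seminorm estimate.) -/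
open MeasureTheory Filter Metric Set
open scoped Topology

/-!
After the substitution `z = x - h`, the integrand at `x` is `(u x - u (x - h)) / ‖h‖ ^ (n + 2 * s)`.
With `r = ‖x - y‖`, Hölder continuity bounds the difference of the two increments
`u x - u (x - h)` and `u y - u (y - h)` by `2 * K * ‖h‖ ^ α` on pairing `x` with `x - h`, and by
`2 * K * r ^ α` on pairing `x` with `y`. So the difference of the integrands is at most
`2 * K * min ‖h‖ r ^ α / ‖h‖ ^ (n + 2 * s)`, which is integrable at the origin because
`2 * s < α` and at infinity because `0 < s`; by scaling its integral is a constant times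
`r ^ (α - 2 * s)`.
-/

open Module (finrank)

section DampedRieszKernel

theorem integrableOn_Ioi_min_rpow_mul_rpow {α q r : ℝ} (hq : q < -1) (hαq : -1 < α + q)
    (hr : 0 < r) : IntegrableOn (fun t : ℝ => min t r ^ α * t ^ q) (Ioi 0) := by
  rw [← Ioc_union_Ioi_eq_Ioi hr.le, integrableOn_union]
  constructor
  · have near_zero : IntegrableOn (fun t : ℝ => t ^ (α + q)) (Ioc 0 r) :=
      (intervalIntegrable_iff_integrableOn_Ioc_of_le hr.le).1
        (intervalIntegral.intervalIntegrable_rpow' hαq)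
    refine near_zero.congr_fun (fun t ht => ?_) measurableSet_Ioc
    simp only [min_eq_left ht.2, Real.rpow_add ht.1]
  · have at_infinity : IntegrableOn (fun t : ℝ => r ^ α * t ^ q) (Ioi r) :=
      (integrableOn_Ioi_rpow_of_lt hq hr).const_mul _
    refine at_infinity.congr_fun (fun t (ht : r < t) => ?_) measurableSet_Ioi
    simp only [min_eq_right ht.le]

variable {E : Type*} [NormedAddCommGroup E]

/-- The Riesz-type kernel `‖h‖ ^ (-p)` damped by the factor `min ‖h‖ r ^ α`, which lowers its
singularity at the origin to `‖h‖ ^ (α - p)` and is constant for `‖h‖ ≥ r`. It dominates the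
integrands of hypersingular integrals of functions with Hölder exponent `α`. -/
noncomputable def dampedRieszKernel (α p r : ℝ) (h : E) : ℝ :=
  min ‖h‖ r ^ α / ‖h‖ ^ p

theorem dampedRieszKernel_nonneg {α p r : ℝ} (hr : 0 ≤ r) (h : E) :
    0 ≤ dampedRieszKernel α p r h := by
  unfold dampedRieszKernel
  positivity

variable {F : Type*} [NormedAddCommGroup F] [NormedSpace ℝ F]

theorem norm_inv_rpow_smul_le_dampedRieszKernel {α p r A : ℝ} {h : E} {w : F}
    (hw : ‖w‖ ≤ A * min ‖h‖ r ^ α) :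
    ‖(‖h‖ ^ p)⁻¹ • w‖ ≤ A * dampedRieszKernel α p r h := by
  have weight_nonneg : 0 ≤ (‖h‖ ^ p)⁻¹ := by positivity
  calc ‖(‖h‖ ^ p)⁻¹ • w‖ = (‖h‖ ^ p)⁻¹ * ‖w‖ := norm_smul_of_nonneg weight_nonneg w
    _ ≤ (‖h‖ ^ p)⁻¹ * (A * min ‖h‖ r ^ α) := by gcongr
    _ = A * dampedRieszKernel α p r h := by unfold dampedRieszKernel; ring

variable [NormedSpace ℝ E]

theorem dampedRieszKernel_eq_rpow_mul {α p r : ℝ} (hr : 0 < r) (h : E) :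
    dampedRieszKernel α p r h = r ^ (α - p) * dampedRieszKernel α p 1 (r⁻¹ • h) := by
  have norm_eq : ‖h‖ = r * ‖r⁻¹ • h‖ := by
    rw [norm_smul_of_nonneg (inv_nonneg.2 hr.le), mul_inv_cancel_left₀ hr.ne']
  have min_eq : min ‖h‖ r = r * min ‖r⁻¹ • h‖ 1 := by
    rw [mul_min_of_nonneg _ _ hr.le, ← norm_eq, mul_one]
  unfold dampedRieszKernel
  rw [min_eq, norm_eq, Real.mul_rpow hr.le (by positivity), Real.mul_rpow hr.le (by positivity),
    Real.rpow_sub hr, mul_div_mul_comm]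

variable [FiniteDimensional ℝ E] [MeasurableSpace E] [BorelSpace E]

theorem integral_dampedRieszKernel (μ : Measure E) [μ.IsAddHaarMeasure] {α p r : ℝ} (hr : 0 < r) :
    ∫ h : E, dampedRieszKernel α p r h ∂μ =
      r ^ (α + finrank ℝ E - p) * ∫ h : E, dampedRieszKernel α p 1 h ∂μ := by
  simp only [dampedRieszKernel_eq_rpow_mul hr]
  rw [integral_const_mul, Measure.integral_comp_inv_smul_of_nonneg _ _ hr.le, smul_eq_mul,
    ← mul_assoc, ← Real.rpow_natCast, ← Real.rpow_add hr, sub_add_eq_add_sub]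

theorem integrable_dampedRieszKernel [Nontrivial E] (μ : Measure E) [μ.IsAddHaarMeasure]
    {α p r : ℝ} (hp : finrank ℝ E < p) (hpα : p < α + finrank ℝ E) (hr : 0 < r) :
    Integrable (dampedRieszKernel α p r : E → ℝ) μ := by
  refine (integrable_fun_norm_addHaar μ (f := fun t : ℝ => min t r ^ α / t ^ p)).2 ?_
  refine (integrableOn_Ioi_min_rpow_mul_rpow (α := α) (q := finrank ℝ E - 1 - p)
    (by linarith) (by linarith) hr).congr_fun (fun t (ht : 0 < t) => ?_) measurableSet_Ioi
  have pow_eq : t ^ (finrank ℝ E - 1) = t ^ (finrank ℝ E - 1 : ℝ) := by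
    rw [← Real.rpow_natCast, Nat.cast_pred Module.finrank_pos]
  simp only [smul_eq_mul, pow_eq, Real.rpow_sub ht _ p]
  ring

variable [Nontrivial E] {μ : Measure E} [μ.IsAddHaarMeasure]

theorem integrable_inv_rpow_smul_of_norm_le {α p r A : ℝ} (hp : finrank ℝ E < p)
    (hpα : p < α + finrank ℝ E) (hr : 0 < r) {w : E → F} (hwm : AEStronglyMeasurable w μ)
    (hw : ∀ h, ‖w h‖ ≤ A * min ‖h‖ r ^ α) :
    Integrable (fun h => (‖h‖ ^ p)⁻¹ • w h) μ :=
  ((integrable_dampedRieszKernel μ hp hpα hr).const_mul A).mono'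
    ((measurable_norm.pow_const p).inv.aestronglyMeasurable.smul hwm)
    (.of_forall fun h => norm_inv_rpow_smul_le_dampedRieszKernel (hw h))

theorem norm_integral_inv_rpow_smul_le {α p r A : ℝ} (hp : finrank ℝ E < p)
    (hpα : p < α + finrank ℝ E) (hr : 0 < r) {w : E → F}
    (hw : ∀ h, ‖w h‖ ≤ A * min ‖h‖ r ^ α) :
    ‖∫ h, (‖h‖ ^ p)⁻¹ • w h ∂μ‖ ≤
      A * (r ^ (α + finrank ℝ E - p) * ∫ h : E, dampedRieszKernel α p 1 h ∂μ) := by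
  rw [← integral_dampedRieszKernel μ hr, ← integral_const_mul]
  exact norm_integral_le_of_norm_le ((integrable_dampedRieszKernel μ hp hpα hr).const_mul A)
    (.of_forall fun h => norm_inv_rpow_smul_le_dampedRieszKernel (hw h))

end DampedRieszKernel

section HolderIncrements

variable {E F : Type*} [SeminormedAddCommGroup E] [SeminormedAddCommGroup F] {α K : ℝ} {u : E → F}

theorem continuous_of_norm_sub_le_mul_rpow (hα : 0 < α)
    (hu : ∀ x y, ‖u x - u y‖ ≤ K * ‖x - y‖ ^ α) : Continuous u := by
  refine continuous_iff_continuousAt.2 fun x => tendsto_iff_norm_sub_tendsto_zero.2 ?_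
  have bound_continuous : Continuous fun y => K * ‖y - x‖ ^ α := by fun_prop (disch := simp [hα.le])
  refine squeeze_zero (fun _ => norm_nonneg _) (fun y => hu y x) ?_
  simpa only [sub_self, norm_zero, Real.zero_rpow hα.ne', mul_zero] using bound_continuous.tendsto x

theorem norm_increment_le_mul_min_one_rpow {M : ℝ} (hM : ∀ x, ‖u x‖ ≤ M) (hK : 0 ≤ K)
    (hu : ∀ x y, ‖u x - u y‖ ≤ K * ‖x - y‖ ^ α) (x h : E) :
    ‖u x - u (x - h)‖ ≤ (K + 2 * M) * min ‖h‖ 1 ^ α := by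
  have hM0 : 0 ≤ M := (norm_nonneg (u 0)).trans (hM 0)
  refine min_rec' (fun t => ‖u x - u (x - h)‖ ≤ (K + 2 * M) * t ^ α) ?_ ?_
  · calc ‖u x - u (x - h)‖ ≤ K * ‖h‖ ^ α := by simpa only [sub_sub_cancel] using hu x (x - h)
      _ ≤ (K + 2 * M) * ‖h‖ ^ α := by gcongr; linarith
  · calc ‖u x - u (x - h)‖ ≤ M + M := norm_sub_le_of_le (hM x) (hM (x - h))
      _ ≤ (K + 2 * M) * 1 ^ α := by rw [Real.one_rpow]; linarith

theorem norm_increment_sub_increment_le_mul_min_rpow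
    (hu : ∀ x y, ‖u x - u y‖ ≤ K * ‖x - y‖ ^ α) (x y h : E) :
    ‖(u x - u (x - h)) - (u y - u (y - h))‖ ≤ 2 * K * min ‖h‖ ‖x - y‖ ^ α := by
  refine min_rec' (fun t => ‖(u x - u (x - h)) - (u y - u (y - h))‖ ≤ 2 * K * t ^ α) ?_ ?_
  · have increment_le (z : E) : ‖u z - u (z - h)‖ ≤ K * ‖h‖ ^ α := by
      simpa only [sub_sub_cancel] using hu z (z - h)
    linarith [norm_sub_le_of_le (increment_le x) (increment_le y)]
  · have shifted_le : ‖u (x - h) - u (y - h)‖ ≤ K * ‖x - y‖ ^ α := by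
      simpa only [sub_sub_sub_cancel_right] using hu (x - h) (y - h)
    rw [sub_sub_sub_comm]
    linarith [norm_sub_le_of_le (hu x y) shifted_le]

end HolderIncrements

section HypersingularIntegral

variable {E F : Type*} [NormedAddCommGroup E] [NormedAddCommGroup F] [NormedSpace ℝ F]

/-- The integrand of the hypersingular integral `∫ y, (u x - u y) / ‖x - y‖ ^ p`. For
`p = dim E + 2 * s` the integral is the fractional Laplacian `(-Δ)^s u x` without its
normalising constant. -/
noncomputable def hypersingularIntegrand (p : ℝ) (u : E → F) (x y : E) : F :=
  (‖x - y‖ ^ p)⁻¹ • (u x - u y)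

theorem hypersingularIntegrand_sub_right (p : ℝ) (u : E → F) (x h : E) :
    hypersingularIntegrand p u x (x - h) = (‖h‖ ^ p)⁻¹ • (u x - u (x - h)) := by
  rw [hypersingularIntegrand, sub_sub_cancel]

variable [NormedSpace ℝ E] [FiniteDimensional ℝ E] [Nontrivial E] [MeasurableSpace E]
  [BorelSpace E] {μ : Measure E} [μ.IsAddHaarMeasure] {α p M K : ℝ} {u : E → F}

theorem integrable_hypersingularIntegrand (hp : finrank ℝ E < p) (hpα : p < α + finrank ℝ E)
    (hM : ∀ x, ‖u x‖ ≤ M) (hK : 0 ≤ K) (hu : ∀ x y, ‖u x - u y‖ ≤ K * ‖x - y‖ ^ α) (x : E) :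
    Integrable (hypersingularIntegrand p u x) μ := by
  have u_continuous : Continuous u := continuous_of_norm_sub_le_mul_rpow (by linarith) hu
  have increment_continuous : Continuous fun h => u x - u (x - h) := by fun_prop
  refine (integrable_comp_sub_left _ x).1 ?_
  simp only [hypersingularIntegrand_sub_right]
  exact integrable_inv_rpow_smul_of_norm_le hp hpα one_pos
    increment_continuous.aestronglyMeasurable (norm_increment_le_mul_min_one_rpow hM hK hu x)

theorem norm_integral_hypersingularIntegrand_sub_le (hp : finrank ℝ E < p)
    (hpα : p < α + finrank ℝ E) (hM : ∀ x, ‖u x‖ ≤ M) (hK : 0 ≤ K)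
    (hu : ∀ x y, ‖u x - u y‖ ≤ K * ‖x - y‖ ^ α) {x y : E} (hxy : x ≠ y) :
    ‖∫ z, hypersingularIntegrand p u x z ∂μ - ∫ z, hypersingularIntegrand p u y z ∂μ‖ ≤
      2 * K * (‖x - y‖ ^ (α + finrank ℝ E - p) * ∫ h : E, dampedRieszKernel α p 1 h ∂μ) := by
  have integrable_shifted (x : E) :
      Integrable (fun h => hypersingularIntegrand p u x (x - h)) μ :=
    (integrable_hypersingularIntegrand hp hpα hM hK hu x).comp_sub_left x
  rw [← integral_sub_left_eq_self (hypersingularIntegrand p u x) μ x,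
    ← integral_sub_left_eq_self (hypersingularIntegrand p u y) μ y,
    ← integral_sub (integrable_shifted x) (integrable_shifted y)]
  simp only [hypersingularIntegrand_sub_right, ← smul_sub]
  exact norm_integral_inv_rpow_smul_le hp hpα (norm_sub_pos_iff.2 hxy)
    (norm_increment_sub_increment_le_mul_min_rpow hu x y)

end HypersingularIntegral

theorem fractionalLaplacian_holder_estimate_general
    {E F : Type*} [NormedAddCommGroup E] [NormedSpace ℝ E] [FiniteDimensional ℝ E] [Nontrivial E]
    [MeasurableSpace E] [BorelSpace E] (μ : Measure E) [μ.IsAddHaarMeasure]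
    [NormedAddCommGroup F] [NormedSpace ℝ F] [CompleteSpace F]
    {s α : ℝ} (hs : 0 < s) (hα : 2 * s < α) :
    ∃ C : ℝ, 0 < C ∧
      ∀ (u : E → F) (M K : ℝ),
        (∀ x, ‖u x‖ ≤ M) → 0 ≤ K →
        (∀ x y, ‖u x - u y‖ ≤ K * ‖x - y‖ ^ α) →
        (∀ x, Integrable (fun y => hypersingularIntegrand (finrank ℝ E + 2 * s) u x y) μ) ∧
        ∀ x y,
          ‖∫ z, hypersingularIntegrand (finrank ℝ E + 2 * s) u x z ∂μ -
              ∫ z, hypersingularIntegrand (finrank ℝ E + 2 * s) u y z ∂μ‖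
            ≤ C * K * ‖x - y‖ ^ (α - 2 * s) := by
  have hp : (finrank ℝ E : ℝ) < finrank ℝ E + 2 * s := by linarith
  have hpα : finrank ℝ E + 2 * s < α + finrank ℝ E := by linarith
  set I := ∫ h : E, dampedRieszKernel α (finrank ℝ E + 2 * s) 1 h ∂μ
  have I_nonneg : 0 ≤ I := integral_nonneg (dampedRieszKernel_nonneg zero_le_one)
  refine ⟨2 * I + 1, by positivity, fun u M K hM hK hu =>
    ⟨integrable_hypersingularIntegrand hp hpα hM hK hu, fun x y => ?_⟩⟩
  rcases eq_or_ne x y with rfl | hxy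
  · rw [sub_self, norm_zero]
    positivity
  calc _ ≤ 2 * K * (‖x - y‖ ^ (α + finrank ℝ E - (finrank ℝ E + 2 * s)) * I) :=
        norm_integral_hypersingularIntegrand_sub_le hp hpα hM hK hu hxy
    _ = 2 * I * K * ‖x - y‖ ^ (α - 2 * s) := by
        rw [add_comm α, add_sub_add_left_eq_sub]
        ring
    _ ≤ (2 * I + 1) * K * ‖x - y‖ ^ (α - 2 * s) := by
        gcongr
        exact le_add_of_nonneg_right zero_le_one

/-- If `u ∈ C^{0,α}(ℝⁿ)` is bounded with `α ∈ (2s,1]`, then the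
singular integral `v(x) = ∫ (u(x) − u(y))/|x−y|^{n+2s} dy` converges absolutely
at every point and `[v]_{C^{0,α−2s}} ≤ C [u]_{C^{0,α}}`, with `C` depending
only on `n, s, α` (here `K` is any Hölder constant for `u`). -/
theorem fractionalLaplacian_holder_estimate
    (n : ℕ) (hn : 1 ≤ n) (s : ℝ) (hs : s ∈ Set.Ioo (0:ℝ) 1)
    (α : ℝ) (hα1 : 2 * s < α) (hα2 : α ≤ 1) :
    ∃ C : ℝ, 0 < C ∧
      ∀ (u : EuclideanSpace ℝ (Fin n) → ℝ) (M K : ℝ),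
        (∀ x, |u x| ≤ M) → 0 ≤ K →
        (∀ x y, |u x - u y| ≤ K * ‖x - y‖ ^ α) →
        (∀ x : EuclideanSpace ℝ (Fin n),
          MeasureTheory.Integrable (fun y : EuclideanSpace ℝ (Fin n) =>
            (u x - u y) / ‖x - y‖ ^ ((n : ℝ) + 2 * s))) ∧
        ∀ x y : EuclideanSpace ℝ (Fin n),
          |(∫ z : EuclideanSpace ℝ (Fin n), (u x - u z) / ‖x - z‖ ^ ((n : ℝ) + 2 * s)) -
              ∫ z : EuclideanSpace ℝ (Fin n), (u y - u z) / ‖y - z‖ ^ ((n : ℝ) + 2 * s)|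
            ≤ C * K * ‖x - y‖ ^ (α - 2 * s) := by
  have : Nonempty (Fin n) := Fin.pos_iff_nonempty.1 hn
  simpa only [hypersingularIntegrand, smul_eq_mul, ← div_eq_inv_mul, finrank_euclideanSpace_fin,
    Real.norm_eq_abs] using fractionalLaplacian_holder_estimate_general
      (F := ℝ) (volume : Measure (EuclideanSpace ℝ (Fin n))) hs.1 hα1
end

section
/- Let n ≥ 1, s ∈ (0,1), and α ∈ (0, 2s) with α > 2s − 1. There exists a constant C > 0 depending only on n, s, α such that: for every bounded C¹ function u : ℝⁿ → ℝ with bounded gradient and [u]_{C^{1,α}} < ∞, the integral v(x) := (1/2) ∫_{ℝⁿ} (2u(x) − u(x+y) − u(x−y))/|y|^{n+2s} dy converges absolutely for every x ∈ ℝⁿ, and [v]_{C^{0, 1+α−2s}} ≤ C [u]_{C^{1,α}}. (That is, if u ∈ C^{1,α}(ℝⁿ) with α < 2s, then (−Δ)^s u ∈ C^{0, α−2s+1}(ℝⁿ), with the corresponding seminorm estimate.) -/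
open MeasureTheory Filter Metric Set
open scoped Topology

/-!
The integrand of `v x - v y` is controlled in two ways. Applying the mean value inequality to
`p ↦ u (p + z) - u p`, whose derivative is at most `K * ‖z‖ ^ α`, bounds the difference of the
second differences at `x` and `y` by `2 * K * ‖z‖ ^ α * min ‖z‖ ‖x - y‖`. After division by
`‖z‖ ^ (n + 2 * s)`, the first power is integrable at the origin because `2 * s < 1 + α` and the
second one is integrable at infinity because `α < 2 * s`. The substitution `z = ‖x - y‖ • w` then
extracts the factor `‖x - y‖ ^ (1 + α - 2 * s)`.
-/

open Module (finrank)
open scoped fwdDiff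

variable {E F : Type*} [NormedAddCommGroup E] [NormedAddCommGroup F] [NormedSpace ℝ F]

/-- The symmetric second difference of `u` at `x` with increment `z`, with the sign convention of
the fractional Laplacian: it is nonnegative at a maximum of `u`. -/
def secondDifference (u : E → F) (x z : E) : F :=
  (2 : ℝ) • u x - u (x + z) - u (x - z)

lemma secondDifference_eq_fwdDiff_sub_fwdDiff (u : E → F) (x z : E) :
    secondDifference u x z = Δ_[z] u (x - z) - Δ_[z] u x := by
  simp only [secondDifference, fwdDiff, sub_add_cancel, two_smul]
  abel

lemma norm_secondDifference_le_of_norm_le {u : E → F} {M : ℝ} (hM : ∀ x, ‖u x‖ ≤ M) (x z : E) :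
    ‖secondDifference u x z‖ ≤ 4 * M := by
  calc ‖secondDifference u x z‖ ≤ ‖(2 : ℝ) • u x‖ + ‖u (x + z)‖ + ‖u (x - z)‖ :=
        (norm_sub_le _ _).trans (by gcongr; exact norm_sub_le _ _)
    _ = 2 * ‖u x‖ + ‖u (x + z)‖ + ‖u (x - z)‖ := by simp [norm_smul]
    _ ≤ 4 * M := by linarith [hM x, hM (x + z), hM (x - z)]

section SecondDifferenceEstimates

variable [NormedSpace ℝ E] {u : E → F} {C : ℝ} {z : E}

lemma norm_fwdDiff_sub_fwdDiff_le (hu : Differentiable ℝ u)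
    (hC : ∀ x, ‖fderiv ℝ u (x + z) - fderiv ℝ u x‖ ≤ C) (p q : E) :
    ‖Δ_[z] u p - Δ_[z] u q‖ ≤ C * ‖p - q‖ := by
  have hderiv (x : E) :
      HasFDerivAt (Δ_[z] u) (fderiv ℝ u (x + z) - fderiv ℝ u x) x :=
    ((hasFDerivAt_comp_add_right z).2 (hu (x + z)).hasFDerivAt).sub (hu x).hasFDerivAt
  exact convex_univ.norm_image_sub_le_of_norm_hasFDerivWithin_le
    (fun x _ => (hderiv x).hasFDerivWithinAt) (fun x _ => hC x) (mem_univ q) (mem_univ p)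

lemma norm_secondDifference_le (hu : Differentiable ℝ u)
    (hC : ∀ x, ‖fderiv ℝ u (x + z) - fderiv ℝ u x‖ ≤ C) (x : E) :
    ‖secondDifference u x z‖ ≤ C * ‖z‖ := by
  simpa [secondDifference_eq_fwdDiff_sub_fwdDiff] using
    norm_fwdDiff_sub_fwdDiff_le hu hC (x - z) x

lemma norm_secondDifference_sub_le (hu : Differentiable ℝ u)
    (hC : ∀ x, ‖fderiv ℝ u (x + z) - fderiv ℝ u x‖ ≤ C) (x y : E) :
    ‖secondDifference u x z - secondDifference u y z‖ ≤ 2 * C * min ‖z‖ ‖x - y‖ := by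
  rcases min_choice ‖z‖ ‖x - y‖ with hmin | hmin <;> rw [hmin]
  · linarith [norm_sub_le (secondDifference u x z) (secondDifference u y z),
      norm_secondDifference_le hu hC x, norm_secondDifference_le hu hC y]
  · calc ‖secondDifference u x z - secondDifference u y z‖
        = ‖(Δ_[z] u (x - z) - Δ_[z] u (y - z)) - (Δ_[z] u x - Δ_[z] u y)‖ := by
          simp only [secondDifference_eq_fwdDiff_sub_fwdDiff, sub_sub_sub_comm]
      _ ≤ C * ‖(x - z) - (y - z)‖ + C * ‖x - y‖ :=
          (norm_sub_le _ _).trans (add_le_add (norm_fwdDiff_sub_fwdDiff_le hu hC _ _)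
            (norm_fwdDiff_sub_fwdDiff_le hu hC _ _))
      _ = 2 * C * ‖x - y‖ := by rw [sub_sub_sub_cancel_right]; ring

end SecondDifferenceEstimates

lemma integrableOn_Ioi_min_rpow {a b : ℝ} (ha : -1 < a) (hb : b < -1) :
    IntegrableOn (fun t : ℝ => min (t ^ a) (t ^ b)) (Ioi 0) := by
  have hmeas : Measurable fun t : ℝ => min (t ^ a) (t ^ b) := by fun_prop
  have hnear : IntegrableOn (fun t : ℝ => t ^ a) (Ioc 0 1) :=
    (intervalIntegrable_iff_integrableOn_Ioc_of_le zero_le_one).1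
      (intervalIntegral.intervalIntegrable_rpow' ha)
  have hfar : IntegrableOn (fun t : ℝ => t ^ b) (Ioi 1) := integrableOn_Ioi_rpow_of_lt hb one_pos
  rw [← Ioc_union_Ioi_eq_Ioi (zero_le_one' ℝ)]
  refine .union (hnear.mono' hmeas.aestronglyMeasurable ?_)
    (hfar.mono' hmeas.aestronglyMeasurable ?_)
  · filter_upwards [ae_restrict_mem measurableSet_Ioc] with t ht
    have : 0 < t := ht.1
    rw [Real.norm_of_nonneg (by positivity)]
    exact min_le_left _ _
  · filter_upwards [ae_restrict_mem measurableSet_Ioi] with t ht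
    have : 0 < t := one_pos.trans ht
    rw [Real.norm_of_nonneg (by positivity)]
    exact min_le_right _ _

lemma min_rpow_norm_eq_rpow_mul_min [NormedSpace ℝ E] {r : ℝ} (hr : 0 < r) (a b : ℝ) (z : E) :
    min (‖z‖ ^ a) (r ^ (a - b) * ‖z‖ ^ b) =
      r ^ a * min (‖r⁻¹ • z‖ ^ a) (‖r⁻¹ • z‖ ^ b) := by
  have hscale (c : ℝ) : ‖r⁻¹ • z‖ ^ c = (r ^ c)⁻¹ * ‖z‖ ^ c := by
    rw [norm_smul, norm_inv, Real.norm_of_nonneg hr.le,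
      Real.mul_rpow (inv_nonneg.2 hr.le) (norm_nonneg z), Real.inv_rpow hr.le]
  rw [mul_min_of_nonneg _ _ (by positivity), hscale, hscale,
    mul_inv_cancel_left₀ (by positivity), ← mul_assoc, ← div_eq_mul_inv, ← Real.rpow_sub hr]

section Haar

variable [NormedSpace ℝ E] [FiniteDimensional ℝ E] [MeasurableSpace E] [BorelSpace E]
  (μ : Measure E) [μ.IsAddHaarMeasure]

lemma integrable_min_rpow_norm [Nontrivial E] {a b : ℝ} (ha : -(finrank ℝ E : ℝ) < a)
    (hb : b < -(finrank ℝ E : ℝ)) :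
    Integrable (fun z : E => min (‖z‖ ^ a) (‖z‖ ^ b)) μ := by
  refine (integrable_fun_norm_addHaar μ (f := fun t : ℝ => min (t ^ a) (t ^ b))).2 <|
    (integrableOn_Ioi_min_rpow (a := a + finrank ℝ E - 1) (b := b + finrank ℝ E - 1)
      (by linarith) (by linarith)).congr_fun (fun t (ht : 0 < t) => ?_) measurableSet_Ioi
  have hpow (c : ℝ) : t ^ (c + finrank ℝ E - 1) = t ^ (finrank ℝ E - 1) * t ^ c := by
    rw [← Real.rpow_natCast, ← Real.rpow_add ht, Nat.cast_pred Module.finrank_pos]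
    ring_nf
  simp only [hpow, smul_eq_mul, mul_min_of_nonneg _ _ (pow_nonneg ht.le _)]

lemma integrable_min_rpow_norm_mul [Nontrivial E] {a b r : ℝ} (hr : 0 < r)
    (ha : -(finrank ℝ E : ℝ) < a) (hb : b < -(finrank ℝ E : ℝ)) :
    Integrable (fun z : E => min (‖z‖ ^ a) (r ^ (a - b) * ‖z‖ ^ b)) μ := by
  simp only [min_rpow_norm_eq_rpow_mul_min hr]
  exact ((integrable_min_rpow_norm μ ha hb).comp_smul (inv_ne_zero hr.ne')).const_mul _

lemma integral_min_rpow_norm_mul {r : ℝ} (hr : 0 < r) (a b : ℝ) :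
    ∫ z : E, min (‖z‖ ^ a) (r ^ (a - b) * ‖z‖ ^ b) ∂μ =
      r ^ (a + finrank ℝ E) * ∫ z : E, min (‖z‖ ^ a) (‖z‖ ^ b) ∂μ := by
  simp only [min_rpow_norm_eq_rpow_mul_min hr]
  rw [integral_const_mul,
    Measure.integral_comp_inv_smul_of_nonneg μ
      (fun z : E => min (‖z‖ ^ a) (‖z‖ ^ b)) hr.le,
    smul_eq_mul, ← mul_assoc, Real.rpow_add hr, Real.rpow_natCast]

end Haar

section FractionalLaplacian

variable [NormedSpace ℝ E]

/-- The integrand `(2 u(x) - u(x + z) - u(x - z)) / |z| ^ (n + 2 s)` of the fractional Laplacian of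
order `s`, where `n` is the dimension of the space. -/
noncomputable def fractionalLaplacianIntegrand (s : ℝ) (u : E → F) (x z : E) : F :=
  (‖z‖ ^ (finrank ℝ E + 2 * s))⁻¹ • secondDifference u x z

/-- The fractional Laplacian `(-Δ)^s u` in second-difference form, without the usual normalizing
constant and with respect to the measure `μ`. Its value is `0` where the integral diverges. -/
noncomputable def fractionalLaplacian [MeasurableSpace E] (μ : Measure E) (s : ℝ) (u : E → F)
    (x : E) : F :=
  (1 / 2 : ℝ) • ∫ z, fractionalLaplacianIntegrand s u x z ∂μ

lemma fractionalLaplacianIntegrand_euclideanSpace {n : ℕ} (s : ℝ)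
    (u : EuclideanSpace ℝ (Fin n) → ℝ) (x z : EuclideanSpace ℝ (Fin n)) :
    fractionalLaplacianIntegrand s u x z =
      (2 * u x - u (x + z) - u (x - z)) / ‖z‖ ^ ((n : ℝ) + 2 * s) := by
  simp [fractionalLaplacianIntegrand, secondDifference, div_eq_inv_mul]

variable {u : E → F} {s α K M : ℝ}

lemma norm_fractionalLaplacianIntegrand_le (hu : Differentiable ℝ u) (hM : ∀ x, ‖u x‖ ≤ M)
    (hK : ∀ x y, ‖fderiv ℝ u x - fderiv ℝ u y‖ ≤ K * ‖x - y‖ ^ α) (x : E) {z : E} (hz : z ≠ 0) :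
    ‖fractionalLaplacianIntegrand s u x z‖ ≤ max K (4 * M) *
      min (‖z‖ ^ (1 + α - (finrank ℝ E + 2 * s))) (‖z‖ ^ (-(finrank ℝ E + 2 * s))) := by
  have hz0 : 0 < ‖z‖ := norm_pos_iff.2 hz
  have hsmooth : ‖secondDifference u x z‖ ≤ K * ‖z‖ ^ α * ‖z‖ :=
    norm_secondDifference_le hu (fun p => by simpa using hK (p + z) p) x
  have hbounded := norm_secondDifference_le_of_norm_le hM x z
  rw [fractionalLaplacianIntegrand, norm_smul, norm_inv, Real.norm_of_nonneg (by positivity)]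
  set p := (finrank ℝ E : ℝ) + 2 * s
  rcases min_choice (‖z‖ ^ (1 + α - p)) (‖z‖ ^ (-p)) with hmin | hmin <;> rw [hmin]
  · calc (‖z‖ ^ p)⁻¹ * ‖secondDifference u x z‖ ≤ (‖z‖ ^ p)⁻¹ * (K * ‖z‖ ^ α * ‖z‖) := by gcongr
      _ = K * ‖z‖ ^ (1 + α - p) := by
        rw [add_sub_assoc, Real.rpow_add hz0 1, Real.rpow_sub hz0, Real.rpow_one]; ring
      _ ≤ max K (4 * M) * ‖z‖ ^ (1 + α - p) := by gcongr; exact le_max_left _ _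
  · calc (‖z‖ ^ p)⁻¹ * ‖secondDifference u x z‖ ≤ (‖z‖ ^ p)⁻¹ * max K (4 * M) := by
          gcongr; exact hbounded.trans (le_max_right _ _)
      _ = max K (4 * M) * ‖z‖ ^ (-p) := by rw [Real.rpow_neg hz0.le, mul_comm]

lemma norm_fractionalLaplacianIntegrand_sub_le (hu : Differentiable ℝ u)
    (hK : ∀ x y, ‖fderiv ℝ u x - fderiv ℝ u y‖ ≤ K * ‖x - y‖ ^ α) (x y : E) {z : E} (hz : z ≠ 0) :
    ‖fractionalLaplacianIntegrand s u x z - fractionalLaplacianIntegrand s u y z‖ ≤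
      2 * K * min (‖z‖ ^ (1 + α - (finrank ℝ E + 2 * s)))
        (‖x - y‖ * ‖z‖ ^ (α - (finrank ℝ E + 2 * s))) := by
  have hz0 : 0 < ‖z‖ := norm_pos_iff.2 hz
  rw [fractionalLaplacianIntegrand, fractionalLaplacianIntegrand, ← smul_sub, norm_smul, norm_inv,
    Real.norm_of_nonneg (by positivity)]
  set p := (finrank ℝ E : ℝ) + 2 * s
  calc (‖z‖ ^ p)⁻¹ * ‖secondDifference u x z - secondDifference u y z‖
      ≤ (‖z‖ ^ p)⁻¹ * (2 * (K * ‖z‖ ^ α) * min ‖z‖ ‖x - y‖) := by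
        gcongr
        exact norm_secondDifference_sub_le hu (fun p => by simpa using hK (p + z) p) x y
    _ = 2 * K * (‖z‖ ^ (α - p) * min ‖z‖ ‖x - y‖) := by rw [Real.rpow_sub hz0]; ring
    _ = 2 * K * min (‖z‖ ^ (1 + α - p)) (‖x - y‖ * ‖z‖ ^ (α - p)) := by
        rw [mul_min_of_nonneg _ _ (by positivity), add_sub_assoc, Real.rpow_add hz0, Real.rpow_one,
          mul_comm ‖z‖, mul_comm ‖x - y‖]

variable [Nontrivial E] [FiniteDimensional ℝ E] [MeasurableSpace E] [BorelSpace E]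
  (μ : Measure E) [μ.IsAddHaarMeasure]

lemma integrable_fractionalLaplacianIntegrand (hs : 0 < s) (hα : 2 * s - 1 < α)
    (hu : Differentiable ℝ u) (hM : ∀ x, ‖u x‖ ≤ M)
    (hK : ∀ x y, ‖fderiv ℝ u x - fderiv ℝ u y‖ ≤ K * ‖x - y‖ ^ α) (x : E) :
    Integrable (fractionalLaplacianIntegrand s u x) μ := by
  have hdom := (integrable_min_rpow_norm μ (a := 1 + α - (finrank ℝ E + 2 * s))
    (b := -(finrank ℝ E + 2 * s)) (by linarith) (by linarith)).const_mul (max K (4 * M))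
  have hmeas : AEStronglyMeasurable (fractionalLaplacianIntegrand s u x) μ := by
    have hcont := hu.continuous
    have hkernel : Measurable fun z : E => (‖z‖ ^ (finrank ℝ E + 2 * s))⁻¹ := by fun_prop
    refine hkernel.aestronglyMeasurable.smul (Continuous.aestronglyMeasurable ?_)
    unfold secondDifference
    fun_prop
  refine hdom.mono' hmeas ?_
  filter_upwards [μ.ae_ne 0] with z hz using norm_fractionalLaplacianIntegrand_le hu hM hK x hz

theorem norm_fractionalLaplacian_sub_le (hα₁ : α < 2 * s) (hα₂ : 2 * s - 1 < α)
    (hu : Differentiable ℝ u)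
    (hK : ∀ x y, ‖fderiv ℝ u x - fderiv ℝ u y‖ ≤ K * ‖x - y‖ ^ α)
    {x y : E} (hx : Integrable (fractionalLaplacianIntegrand s u x) μ)
    (hy : Integrable (fractionalLaplacianIntegrand s u y) μ) :
    ‖fractionalLaplacian μ s u x - fractionalLaplacian μ s u y‖ ≤
      (∫ z : E, min (‖z‖ ^ (1 + α - (finrank ℝ E + 2 * s)))
        (‖z‖ ^ (α - (finrank ℝ E + 2 * s))) ∂μ) * K * ‖x - y‖ ^ (1 + α - 2 * s) := by
  rcases eq_or_ne x y with rfl | hxy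
  · simp [Real.zero_rpow (by linarith : 1 + α - 2 * s ≠ 0)]
  have hr : 0 < ‖x - y‖ := norm_pos_iff.2 (sub_ne_zero.2 hxy)
  set p := (finrank ℝ E : ℝ) + 2 * s with hp
  have hgap : 1 + α - p - (α - p) = 1 := by ring
  have hhomogeneity : 1 + α - p + finrank ℝ E = 1 + α - 2 * s := by rw [hp]; ring
  have hmajorant := integrable_min_rpow_norm_mul μ hr
    (a := 1 + α - p) (b := α - p) (by linarith) (by linarith)
  have hscaling := integral_min_rpow_norm_mul μ hr (1 + α - p) (α - p)
  rw [hgap, Real.rpow_one] at hmajorant hscaling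
  rw [fractionalLaplacian, fractionalLaplacian, ← smul_sub, ← integral_sub hx hy,
    norm_smul, Real.norm_of_nonneg (by norm_num)]
  calc 1 / 2 *
        ‖∫ z, fractionalLaplacianIntegrand s u x z - fractionalLaplacianIntegrand s u y z ∂μ‖
      ≤ 1 / 2 * ∫ z, 2 * K * min (‖z‖ ^ (1 + α - p)) (‖x - y‖ * ‖z‖ ^ (α - p)) ∂μ := by
        gcongr
        refine norm_integral_le_of_norm_le (hmajorant.const_mul _) ?_
        filter_upwards [μ.ae_ne 0] with z hz
          using norm_fractionalLaplacianIntegrand_sub_le hu hK x y hz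
    _ = (∫ z, min (‖z‖ ^ (1 + α - p)) (‖z‖ ^ (α - p)) ∂μ) * K * ‖x - y‖ ^ (1 + α - 2 * s) := by
        rw [integral_const_mul, hscaling, hhomogeneity]
        ring

theorem fractionalLaplacian_C1alpha_estimate_general [CompleteSpace F] (hs : 0 < s)
    (hα₁ : α < 2 * s) (hα₂ : 2 * s - 1 < α) :
    ∃ C : ℝ, 0 < C ∧ ∀ (u : E → F) (M K : ℝ), (∀ x, ‖u x‖ ≤ M) → Differentiable ℝ u → 0 ≤ K →
      (∀ x y, ‖fderiv ℝ u x - fderiv ℝ u y‖ ≤ K * ‖x - y‖ ^ α) →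
      (∀ x, Integrable (fractionalLaplacianIntegrand s u x) μ) ∧
      ∀ x y, ‖fractionalLaplacian μ s u x - fractionalLaplacian μ s u y‖ ≤
        C * K * ‖x - y‖ ^ (1 + α - 2 * s) := by
  set I := ∫ z : E, min (‖z‖ ^ (1 + α - (finrank ℝ E + 2 * s)))
    (‖z‖ ^ (α - (finrank ℝ E + 2 * s))) ∂μ
  have hI : 0 ≤ I := integral_nonneg fun z => by positivity
  refine ⟨I + 1, add_pos_of_nonneg_of_pos hI one_pos, fun u M K hM hu hK₀ hK => ?_⟩
  have hint := integrable_fractionalLaplacianIntegrand μ hs hα₂ hu hM hK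
  refine ⟨hint, fun x y =>
    (norm_fractionalLaplacian_sub_le μ hα₁ hα₂ hu hK (hint x) (hint y)).trans ?_⟩
  gcongr
  exact le_add_of_nonneg_right zero_le_one

end FractionalLaplacian

/-- If `u ∈ C^{1,α}(ℝⁿ)` is bounded with bounded gradient and
`α ∈ (2s−1, 2s) ∩ (0,2s)`, then the second-difference integral
`v(x) = (1/2)∫ (2u(x) − u(x+y) − u(x−y))/|y|^{n+2s} dy` converges absolutely at
every point and `[v]_{C^{0,1+α−2s}} ≤ C [u]_{C^{1,α}}`, with `C` depending only
on `n, s, α` (here `K` is any Hölder constant for the gradient of `u`). -/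
theorem fractionalLaplacian_C1alpha_estimate
    (n : ℕ) (hn : 1 ≤ n) (s : ℝ) (hs : s ∈ Set.Ioo (0:ℝ) 1)
    (α : ℝ) (hα0 : 0 < α) (hα1 : α < 2 * s) (hα2 : 2 * s - 1 < α) :
    ∃ C : ℝ, 0 < C ∧
      ∀ (u : EuclideanSpace ℝ (Fin n) → ℝ) (M M' K : ℝ),
        (∀ x, |u x| ≤ M) →
        ContDiff ℝ 1 u →
        (∀ x, ‖fderiv ℝ u x‖ ≤ M') → 0 ≤ K →
        (∀ x y, ‖fderiv ℝ u x - fderiv ℝ u y‖ ≤ K * ‖x - y‖ ^ α) →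
        (∀ x : EuclideanSpace ℝ (Fin n),
          MeasureTheory.Integrable (fun y : EuclideanSpace ℝ (Fin n) =>
            (2 * u x - u (x + y) - u (x - y)) / ‖y‖ ^ ((n : ℝ) + 2 * s))) ∧
        ∀ x y : EuclideanSpace ℝ (Fin n),
          |(1 / 2) * (∫ z : EuclideanSpace ℝ (Fin n),
                (2 * u x - u (x + z) - u (x - z)) / ‖z‖ ^ ((n : ℝ) + 2 * s)) -
              (1 / 2) * ∫ z : EuclideanSpace ℝ (Fin n),
                (2 * u y - u (y + z) - u (y - z)) / ‖z‖ ^ ((n : ℝ) + 2 * s)|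
            ≤ C * K * ‖x - y‖ ^ (1 + α - 2 * s) := by
  have : Nonempty (Fin n) := ⟨⟨0, hn⟩⟩
  obtain ⟨C, hC, hgeneral⟩ := fractionalLaplacian_C1alpha_estimate_general
    (E := EuclideanSpace ℝ (Fin n)) (F := ℝ) volume hs.1 hα1 hα2
  refine ⟨C, hC, fun u M _ K hM hu _ hK₀ hK => ?_⟩
  simpa only [fractionalLaplacian, funext (fractionalLaplacianIntegrand_euclideanSpace s u _),
    smul_eq_mul, Real.norm_eq_abs] using hgeneral u M K hM (hu.differentiable one_ne_zero) hK₀ hK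
end
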